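/- Let L ⊊ S, so that the subgroup W_L generated by L is a finite Weyl group, with longest element w_L. Then (Σ_{x∈W_L, w_L x w_L = x} q^{ℓ(x)}) · (1−q)^{n_L} = (Σ_{x∈W_L} (−q)^{ℓ(x)}) · (1+q)^{n_L} as polynomials in q; equivalently, P_{L,Ad(w_L)}(q) = P_L(−q)·((1+q)/(1−q))^{n_L} in ℚ(q), where Ad(w_L) is conjugation by w_L on W_L. -/

import Mathlib

set_option synthInstance.maxHeartbeats 1000000
set_option maxHeartbeats 2000000

open scoped Classical

noncomputable section

namespace LY

/-! ## The coefficient field `ℚ(q)` -/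

/-- The field `ℚ(q)` of rational functions. -/
abbrev K : Type := RatFunc ℚ

/-- The indeterminate `q`. -/
def qK : K := RatFunc.X

/-- The inclusion `ℤ[q] → ℚ(q)`. -/
def toK (p : Polynomial ℤ) : K := algebraMap (Polynomial ℚ) K (p.map (Int.castRingHom ℚ))

/-- Evaluation of `p ∈ ℤ[q]` at `−q`, as an element of `ℚ(q)`; i.e. `p(−q)`. -/
def atNegQ (p : Polynomial ℤ) : K := Polynomial.eval₂ (Int.castRingHom K) (-qK) p

/-- The standard basis element `T_w` (resp. `a_w`) of the function model `W → ℚ(q)`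
of the Hecke algebra (resp. of the Lusztig–Vogan module `M`). -/
def TT {W : Type} (w : W) : W → K := fun y => if y = w then 1 else 0

variable {B W : Type} [Group W] {M : CoxeterMatrix B}

/-- The Bruhat order on a Coxeter group: `u ≤ v` iff `v` is obtained from `u` by successive
right multiplications by reflections, each increasing the length. -/
def BruhatLE (cs : CoxeterSystem M W) (u v : W) : Prop :=
  Relation.ReflTransGen
    (fun a b => cs.length a < cs.length b ∧ ∃ t, cs.IsReflection t ∧ b = a * t) u v

/-- Connectedness of the Coxeter diagram of `M`. -/
def DiagramConnected (M : CoxeterMatrix B) : Prop :=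
  ∀ i j : B, Relation.ReflTransGen (fun a b => a ≠ b ∧ M a b ≠ 2) i j

/-- An automorphism of `W` preserving the set `S` of simple reflections, i.e. an element
of `A = Aut(W,S)`. -/
def IsDiagAut (cs : CoxeterSystem M W) (a : MulAut W) : Prop :=
  (⇑a) '' (Set.range cs.simple) = Set.range cs.simple

/-! ## The affine setting -/

/-- All the data and axioms describing the setting: `(W,S)` is the Coxeter group of an
untwisted connected affine Dynkin diagram (an irreducible affine Weyl group); `Λ` is the
subgroup of translations (elements with finite conjugacy class), free abelian of finite
rank and of finite index; `s₀` is a hyperspecial vertex, `J = S − {s₀}`, `W_J` is the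
finite subgroup generated by `J` with longest element `w_J`; `*` is the involution of `W`
given by `w* = w_J w w_J` on `W_J` and `λ* = −(ʷᴶλ)` on `Λ`; `pr` is the projection
`W → W_J` along `Λ`; `ρ` is the conjugation action of `W` on `Λ_ℚ ≅ ℚ^rank`
(via the identification `freeIso` of `Λ` with `ℤ^rank`). -/
structure AffineData (cs : CoxeterSystem M W) where
  finB : Finite B
  conn : DiagramConnected M
  infW : Infinite W
  /-- the subgroup `Λ` of translations -/
  Lam : Subgroup W
  hLam_mem : ∀ w : W, w ∈ Lam ↔ {x : W | IsConj w x}.Finite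
  hLam_normal : Lam.Normal
  hLam_comm : ∀ a ∈ Lam, ∀ b ∈ Lam, a * b = b * a
  hLam_index : Lam.FiniteIndex
  /-- `Λ` is free abelian of finite rank -/
  rank : ℕ
  freeIso : Lam ≃* Multiplicative (Fin rank → ℤ)
  /-- the hyperspecial vertex `s₀` -/
  s0 : W
  hs0_S : s0 ∈ Set.range cs.simple
  /-- `s₀` is hyperspecial: the projection `W → W/Λ` restricts to an isomorphism from the
  subgroup generated by `S − {s₀}` onto `W/Λ`. -/
  hs0_hyper : ∀ w : W, ∃! u : W,
    u ∈ Subgroup.closure (Set.range cs.simple \ {s0}) ∧ w * u⁻¹ ∈ Lam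
  hWJ_fin : (Subgroup.closure (Set.range cs.simple \ {s0}) : Set W).Finite
  /-- the longest element `w_J` of `W_J` -/
  wJ : W
  hwJ_mem : wJ ∈ Subgroup.closure (Set.range cs.simple \ {s0})
  hwJ_max : ∀ u ∈ Subgroup.closure (Set.range cs.simple \ {s0}), cs.length u ≤ cs.length wJ
  /-- the involution `*` of `W` -/
  st : MulAut W
  hst_inv : ∀ w : W, st (st w) = w
  hst_J : ∀ u ∈ Subgroup.closure (Set.range cs.simple \ {s0}), st u = wJ * u * wJ
  hst_Lam : ∀ l ∈ Lam, st l = (wJ * l * wJ⁻¹)⁻¹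
  hst_S : ∀ s ∈ Set.range cs.simple, st s ∈ Set.range cs.simple
  /-- lower Bruhat intervals are finite -/
  hBruhat_fin : ∀ w : W, {y : W | BruhatLE cs y w}.Finite
  /-- the projection `W → W_J` along `Λ` (`w ↦ w̄`) -/
  pr : W → W
  hpr : ∀ w : W, pr w ∈ Subgroup.closure (Set.range cs.simple \ {s0}) ∧ w * (pr w)⁻¹ ∈ Lam
  /-- the conjugation action of `W` on `Λ_ℚ ≅ ℚ^rank` -/
  rho : W → ((Fin rank → ℚ) →ₗ[ℚ] (Fin rank → ℚ))
  hrho : ∀ (w : W) (l : Lam),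
    rho w (fun i => ((Multiplicative.toAdd (freeIso l)) i : ℚ)) =
      fun i => ((Multiplicative.toAdd
        (freeIso ⟨w * (l : W) * w⁻¹, hLam_normal.conj_mem _ l.2 w⟩)) i : ℚ)

namespace AffineData

variable {cs : CoxeterSystem M W} (D : AffineData cs)

/-- The set `J = S − {s₀}`. -/
def Jset : Set W := Set.range cs.simple \ {D.s0}

/-- The finite Weyl group `W_J`. -/
def WJ : Subgroup W := Subgroup.closure D.Jset

/-- `λ ∈ Λ` is a dominant translation (`λ ∈ Λ⁺`). -/
def IsDominant (l : W) : Prop :=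
  l ∈ D.Lam ∧ cs.length (l * D.wJ) = cs.length l + cs.length D.wJ

/-- The embedding `Λ → Λ_ℚ = ℚ^rank`. -/
def iota (l : D.Lam) : Fin D.rank → ℚ :=
  fun i => ((Multiplicative.toAdd (D.freeIso l)) i : ℚ)

/-- `e(A)`: the dimension of the `(−1)`-eigenspace of a linear endomorphism `A` of `Λ_ℚ`. -/
def eNeg (f : (Fin D.rank → ℚ) →ₗ[ℚ] (Fin D.rank → ℚ)) : ℕ :=
  Module.finrank ℚ (Module.End.eigenspace (f : Module.End ℚ (Fin D.rank → ℚ)) (-1))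

/-- The map `A_u : λ ↦ ᵘ(λ*) = −(ᵘʷᴶλ)` on `Λ_ℚ`, for `u ∈ W_J`. -/
def Amap (u : W) : (Fin D.rank → ℚ) →ₗ[ℚ] (Fin D.rank → ℚ) := - D.rho (u * D.wJ)

/-- The invariant `φ(w) = e(A_{w̄}) − e(A_e)` for `w ∈ I_*`. -/
def phi (w : W) : ℤ := (D.eNeg (D.Amap (D.pr w)) : ℤ) - (D.eNeg (D.Amap 1) : ℤ)

/-- The double coset `W_J x W_J`. -/
def DCoset (x : W) : Set W := {y : W | ∃ u ∈ D.WJ, ∃ v ∈ D.WJ, y = u * x * v}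

/-- The set `H = J ∩ bJb⁻¹`. -/
def Hset (b : W) : Set W := D.Jset ∩ ((fun s => b * s * b⁻¹) '' D.Jset)

/-- The set `H* ⊆ J`, image of `H` under `*`. -/
def Hstar (b : W) : Set W := (⇑D.st) '' D.Hset b

/-- The subgroup `W_{H*}` generated by `H*`. -/
def WHstar (b : W) : Subgroup W := Subgroup.closure (D.Hstar b)

/-- The reflection representation `R'` of `W_{H*}`, as a subspace of `Λ_ℚ`:
the span of the vectors `λ − ˢλ` for `λ ∈ Λ`, `s ∈ H*`. -/
def Rprime (b : W) : Submodule ℚ (Fin D.rank → ℚ) :=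
  Submodule.span ℚ
    {v : Fin D.rank → ℚ | ∃ l : D.Lam, ∃ s ∈ D.Hstar b,
      v = D.iota l - D.iota ⟨s * (l : W) * s⁻¹, D.hLam_normal.conj_mem _ l.2 s⟩}

/-- `e'(A)`: the dimension of the `(−1)`-eigenspace of an endomorphism `A` of `R'`. -/
def eNeg' {b : W} (f : ↥(D.Rprime b) →ₗ[ℚ] ↥(D.Rprime b)) : ℕ :=
  Module.finrank ℚ (Module.End.eigenspace (f : Module.End ℚ ↥(D.Rprime b)) (-1))

/-- `φ'(z) = e'(B_z) − e'(B_e)`, where `B_u : x ↦ −u·(w_{H*}·x)` on `R'`; here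
`rho'` is the conjugation action of `W_{H*}` on `R'` and `wHs` is the longest element
of `W_{H*}`. -/
def phiP {b : W} (rho' : W → (↥(D.Rprime b) →ₗ[ℚ] ↥(D.Rprime b))) (wHs z : W) : ℤ :=
  (D.eNeg' (-(rho' (z * wHs))) : ℤ) - (D.eNeg' (-(rho' wHs)) : ℤ)

/-- Membership in `A_Λ ⊆ A = Aut(W,S)`: automorphisms acting on `Λ` as conjugation by some
element of `W_J`. -/
def InALam (a : MulAut W) : Prop :=
  IsDiagAut cs a ∧ ∃ w ∈ D.WJ, ∀ l ∈ D.Lam, a l = w * l * w⁻¹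

/-- Membership in the coset `A_Λ* = {a ∘ * : a ∈ A_Λ}`. -/
def InALamStar (c : MulAut W) : Prop := ∃ a : MulAut W, D.InALam a ∧ c = a * D.st

/-- The double coset `W_J x W_J^◇`, where `W_J^◇` is the subgroup generated by
`J^◇ = S − {s₁}`. -/
def DCosetDia (s1 : W) (x : W) : Set W :=
  {y : W | ∃ u ∈ D.WJ, ∃ v ∈ Subgroup.closure (Set.range cs.simple \ {s1}), y = u * x * v}


end AffineData

/-! ## The Hecke algebra, the Lusztig–Vogan module, and the polynomials `P`, `P^σ` -/

/-- The Hecke algebra of `(W,S)` over `ℚ(q)` (modelled on functions `W → ℚ(q)`, with basis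
`TT w = T_w`), together with its bar involution, and the Kazhdan–Lusztig polynomials
`P_{y,w} ∈ ℤ[q]` characterized by their defining properties. -/
structure HeckeData (cs : CoxeterSystem M W) where
  /-- the involution `q ↦ q⁻¹` of `ℚ(q)` -/
  barK : K →+* K
  hbarK_X : barK qK = qK⁻¹
  hbarK_inv : ∀ x, barK (barK x) = x
  /-- the multiplication of the Hecke algebra -/
  mulH : (W → K) →ₗ[K] (W → K) →ₗ[K] (W → K)
  hmul_assoc : ∀ x y z : W → K, mulH (mulH x y) z = mulH x (mulH y z)
  hmul_one : ∀ x : W → K, mulH (TT 1) x = x ∧ mulH x (TT 1) = x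
  hmul_TT : ∀ u v : W, cs.length (u * v) = cs.length u + cs.length v →
    mulH (TT u) (TT v) = TT (u * v)
  hmul_Ts : ∀ s ∈ Set.range cs.simple,
    mulH (TT s) (TT s) = (qK - 1) • TT s + qK • TT (1 : W)
  /-- the bar involution of the Hecke algebra: the ring involution with `q ↦ q⁻¹`,
  `T_w ↦ (T_{w⁻¹})⁻¹` -/
  barH : (W → K) →+ (W → K)
  hbarH_inv : ∀ x, barH (barH x) = x
  hbarH_smul : ∀ (c : K) (x : W → K), barH (c • x) = barK c • barH x
  hbarH_mul : ∀ x y : W → K, barH (mulH x y) = mulH (barH x) (barH y)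
  hbarH_T : ∀ w : W, mulH (barH (TT w)) (TT w⁻¹) = TT (1 : W) ∧
    mulH (TT w⁻¹) (barH (TT w)) = TT (1 : W)
  /-- the Kazhdan–Lusztig polynomials `P_{y,w}` -/
  P : W → W → Polynomial ℤ
  hP_supp : ∀ y w : W, ¬ BruhatLE cs y w → P y w = 0
  hP_diag : ∀ w : W, P w w = 1
  hP_deg : ∀ y w : W, BruhatLE cs y w → y ≠ w →
    2 * (P y w).natDegree + 1 ≤ cs.length w - cs.length y
  hP_dual : ∀ w : W,
    (qK ^ cs.length w) • barH (fun y => if BruhatLE cs y w then toK (P y w) else 0)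
      = fun y => if BruhatLE cs y w then toK (P y w) else 0

/-- The Lusztig–Vogan module `M` over the Hecke algebra `H'` with parameter `q²`, attached to
a length-preserving involutive automorphism `star` of `(W,S)`, together with its bar
involution, and the polynomials `P^σ_{y,w} ∈ ℤ[q]` (for `y, w ∈ I_*`) characterized by their
defining properties.  Both `H'` and `M` are modelled on functions `W → ℚ(q)`; the basis
element `a_w` of `M` (for `w ∈ I_*`) is `TT w`. -/
structure LVData (cs : CoxeterSystem M W) (star : MulAut W) where
  /-- the involution `q ↦ q⁻¹` of `ℚ(q)` -/
  barK : K →+* K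
  hbarK_X : barK qK = qK⁻¹
  hbarK_inv : ∀ x, barK (barK x) = x
  /-- the multiplication of the Hecke algebra `H'` with parameter `q²` -/
  mulH' : (W → K) →ₗ[K] (W → K) →ₗ[K] (W → K)
  hmul'_assoc : ∀ x y z : W → K, mulH' (mulH' x y) z = mulH' x (mulH' y z)
  hmul'_one : ∀ x : W → K, mulH' (TT 1) x = x ∧ mulH' x (TT 1) = x
  hmul'_TT : ∀ u v : W, cs.length (u * v) = cs.length u + cs.length v →
    mulH' (TT u) (TT v) = TT (u * v)
  hmul'_Ts : ∀ s ∈ Set.range cs.simple,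
    mulH' (TT s) (TT s) = (qK ^ 2 - 1) • TT s + (qK ^ 2) • TT (1 : W)
  /-- the bar involution of `H'` -/
  barH' : (W → K) →+ (W → K)
  hbarH'_inv : ∀ x, barH' (barH' x) = x
  hbarH'_smul : ∀ (c : K) (x : W → K), barH' (c • x) = barK c • barH' x
  hbarH'_mul : ∀ x y : W → K, barH' (mulH' x y) = mulH' (barH' x) (barH' y)
  hbarH'_T : ∀ w : W, mulH' (barH' (TT w)) (TT w⁻¹) = TT (1 : W) ∧
    mulH' (TT w⁻¹) (barH' (TT w)) = TT (1 : W)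
  /-- the action of `H'` on the module `M` -/
  actM : (W → K) →ₗ[K] (W → K) →ₗ[K] (W → K)
  hact_one : ∀ m : W → K, actM (TT 1) m = m
  hact_mul : ∀ (h h' : W → K) (m : W → K), actM (mulH' h h') m = actM h (actM h' m)
  hact1 : ∀ s ∈ Set.range cs.simple, ∀ w : W, star w = w⁻¹ →
    s * w = w * star s → cs.length w < cs.length (s * w) →
    actM (TT s) (TT w) = qK • TT w + (qK + 1) • TT (s * w)
  hact2 : ∀ s ∈ Set.range cs.simple, ∀ w : W, star w = w⁻¹ →
    s * w = w * star s → cs.length (s * w) < cs.length w →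
    actM (TT s) (TT w) = (qK ^ 2 - qK - 1) • TT w + (qK ^ 2 - qK) • TT (s * w)
  hact3 : ∀ s ∈ Set.range cs.simple, ∀ w : W, star w = w⁻¹ →
    s * w ≠ w * star s → cs.length w < cs.length (s * w) →
    actM (TT s) (TT w) = TT (s * w * star s)
  hact4 : ∀ s ∈ Set.range cs.simple, ∀ w : W, star w = w⁻¹ →
    s * w ≠ w * star s → cs.length (s * w) < cs.length w →
    actM (TT s) (TT w) = (qK ^ 2 - 1) • TT w + (qK ^ 2) • TT (s * w * star s)
  /-- the bar involution of the module `M` -/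
  barM : (W → K) →+ (W → K)
  hbarM_inv : ∀ m : W → K, barM (barM m) = m
  hbarM_smul : ∀ (c : K) (m : W → K), barM (c • m) = barK c • barM m
  hbarM_act : ∀ (h m : W → K), barM (actM h m) = actM (barH' h) (barM m)
  hbarM_one : barM (TT 1) = TT (1 : W)
  /-- the Lusztig–Vogan polynomials `P^σ_{y,w}` -/
  Psig : W → W → Polynomial ℤ
  hPsig_supp : ∀ y w : W, ¬ (BruhatLE cs y w ∧ star y = y⁻¹) → Psig y w = 0
  hPsig_diag : ∀ w : W, star w = w⁻¹ → Psig w w = 1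
  hPsig_deg : ∀ y w : W, star w = w⁻¹ → star y = y⁻¹ → BruhatLE cs y w → y ≠ w →
    2 * (Psig y w).natDegree + 1 ≤ cs.length w - cs.length y
  hPsig_dual : ∀ w : W, star w = w⁻¹ →
    (qK ^ (2 * cs.length w)) •
        barM (fun y => if BruhatLE cs y w ∧ star y = y⁻¹ then toK (Psig y w) else 0)
      = fun y => if BruhatLE cs y w ∧ star y = y⁻¹ then toK (Psig y w) else 0

/-! ## The `Z`-polynomials -/

/-- `Z_w(q) = Σ_{y ≤ w} P_{y,w}(q) q^{ℓ(y)}`. -/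
def Zpoly (cs : CoxeterSystem M W) (HD : HeckeData cs) (w : W) : K :=
  ∑ᶠ y : W, if BruhatLE cs y w then toK (HD.P y w) * qK ^ cs.length y else 0

/-- `Z_w(−q) = Σ_{y ≤ w} P_{y,w}(−q) (−q)^{ℓ(y)}`. -/
def ZpolyNeg (cs : CoxeterSystem M W) (HD : HeckeData cs) (w : W) : K :=
  ∑ᶠ y : W, if BruhatLE cs y w then atNegQ (HD.P y w) * (-qK) ^ cs.length y else 0

/-- `Z^σ_w(q) = Σ_{y ≤ w, y ∈ I_*} P^σ_{y,w}(q) q^{ℓ(y)} ((q−1)/(q+1))^{φ(y)}`. -/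
def Zsig (cs : CoxeterSystem M W) (D : AffineData cs) (LD : LVData cs D.st) (w : W) : K :=
  ∑ᶠ y : W, if BruhatLE cs y w ∧ D.st y = y⁻¹ then
    toK (LD.Psig y w) * qK ^ cs.length y * ((qK - 1) / (qK + 1)) ^ D.phi y else 0

/-!
Write `P_τ(q)` for the Poincaré polynomial of the fixed points of a diagram automorphism `τ` of a
finite Coxeter group `W`, acting by `τ` on the geometric representation `V`. A signed count over
the `τ`-stable parabolic subgroups yields Steinberg's formula: `P_τ(q)` times the average over
`w ∈ W` of the Molien series `∑ tr(wτ | Sᵈ V) qᵈ` equals the Molien series of `τ` itself. For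
`τ = Ad(w₀)`, with `w₀` the longest element, `τ` acts on `V` as `-w₀`, so that the averages for `τ`
and for the identity differ by `q ↦ -q`. Hence `P_τ(q) (1 - q)ᵃ = P(-q) (1 + q)ᵃ` for some `a`,
and `a` is the order of vanishing of `P(-q) = ∏ (1 - q + ⋯ ± q^e)` at `q = 1`, that is, the number
of odd exponents `e`. Parabolic subgroups of an infinite Coxeter group reduce to this case, as they
are Coxeter groups with the same length function.
-/

section

open Polynomial.Chebyshev CoxeterSystem

variable {B W : Type*} [Group W] {M : CoxeterMatrix B}

/-! ### The geometric representation -/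

/-- The simple root `α_i`, as a vector of the real space with basis `B`. -/
def simpleRoot (i : B) : B →₀ ℝ := Finsupp.single i 1

theorem simpleRoot_nonneg (i : B) : 0 ≤ simpleRoot i :=
  Finsupp.single_nonneg.2 zero_le_one

theorem simpleRoot_ne_zero (i : B) : simpleRoot i ≠ 0 :=
  Finsupp.single_ne_zero.2 one_ne_zero

variable (M) in
/-- The invariant symmetric bilinear form of `M`, normalised so that all roots have norm `2`;
the coroot of a root `β` is then `⟨β, ·⟩`. A pair with `M i j = 0` encodes `m = ∞`, and the junk
value `π / 0 = 0` gives it the customary entry `-2`. -/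
def rootForm : (B →₀ ℝ) →ₗ[ℝ] (B →₀ ℝ) →ₗ[ℝ] ℝ :=
  Finsupp.linearCombination ℝ fun i =>
    Finsupp.linearCombination ℝ fun j => -2 * Real.cos (Real.pi / M i j)

theorem rootForm_simpleRoot (i j : B) :
    rootForm M (simpleRoot i) (simpleRoot j) = -2 * Real.cos (Real.pi / M i j) := by
  simp [rootForm, simpleRoot]

theorem rootForm_simpleRoot_self (i : B) : rootForm M (simpleRoot i) (simpleRoot i) = 2 := by
  simp [rootForm_simpleRoot]

theorem rootForm_comm (u v : B →₀ ℝ) : rootForm M u v = rootForm M v u := by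
  suffices rootForm M = (rootForm M).flip from LinearMap.congr_fun₂ this u v
  ext i j
  change rootForm M (simpleRoot i) (simpleRoot j) = rootForm M (simpleRoot j) (simpleRoot i)
  rw [rootForm_simpleRoot, rootForm_simpleRoot, M.symmetric]

theorem eval_S_two_mul_cos_eq_zero {n : ℤ} {θ : ℝ} (hθ : Real.sin θ ≠ 0)
    (h : Real.sin ((n + 1) * θ) = 0) : (S ℝ n).eval (2 * Real.cos θ) = 0 :=
  (mul_eq_zero.1 ((S_two_mul_real_cos θ n).trans h)).resolve_right hθ

theorem eval_S_add_eval_S_sub_one_two_mul_cos_eq_zero {n : ℤ} {θ : ℝ} (hθ : Real.sin θ ≠ 0)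
    (h : (2 * n + 1) * θ = 2 * Real.pi) :
    (S ℝ n).eval (2 * Real.cos θ) + (S ℝ (n - 1)).eval (2 * Real.cos θ) = 0 := by
  refine (mul_eq_zero.1 ?_).resolve_right hθ
  have h₁ : ((n : ℝ) + 1) * θ = Real.pi + θ / 2 := by linarith
  have h₂ : (((n - 1 : ℤ) : ℝ) + 1) * θ = Real.pi - θ / 2 := by push_cast; linarith
  rw [add_mul, S_two_mul_real_cos, S_two_mul_real_cos, h₁, h₂, Real.sin_pi_sub, add_comm Real.pi,
    Real.sin_add_pi, neg_add_cancel]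

variable (M) in
/-- The simple reflection `v ↦ v - ⟨α_i, v⟩ α_i`. -/
def simpleReflection (i : B) : (B →₀ ℝ) ≃ₗ[ℝ] (B →₀ ℝ) :=
  Module.reflection (rootForm_simpleRoot_self (M := M) i)

theorem simpleReflection_apply (i : B) (v : B →₀ ℝ) :
    simpleReflection M i v = v - rootForm M (simpleRoot i) v • simpleRoot i :=
  Module.reflection_apply _ _

theorem sin_two_pi_div_ne_zero {m : ℕ} (hm : 3 ≤ m) : Real.sin (2 * Real.pi / m) ≠ 0 := by
  have hm' : (3 : ℝ) ≤ m := mod_cast hm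
  refine (Real.sin_pos_of_pos_of_lt_pi (by positivity) ?_).ne'
  rw [div_lt_iff₀ (by positivity)]
  nlinarith [Real.pi_pos]

theorem eval_S_two_mul_cos_two_pi_div_even {p : ℕ} (hp : 2 ≤ p) :
    (S ℝ ((p : ℤ) - 1)).eval (2 * Real.cos (2 * Real.pi / (2 * p : ℕ))) = 0 := by
  refine eval_S_two_mul_cos_eq_zero (sin_two_pi_div_ne_zero (by omega)) ?_
  convert Real.sin_pi using 2
  push_cast
  field_simp
  ring

theorem eval_S_add_eval_S_two_mul_cos_two_pi_div_odd {p : ℕ} (hp : 1 ≤ p) :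
    (S ℝ (p : ℤ)).eval (2 * Real.cos (2 * Real.pi / (2 * p + 1 : ℕ)))
      + (S ℝ ((p : ℤ) - 1)).eval (2 * Real.cos (2 * Real.pi / (2 * p + 1 : ℕ))) = 0 := by
  refine eval_S_add_eval_S_sub_one_two_mul_cos_eq_zero (sin_two_pi_div_ne_zero (by omega)) ?_
  push_cast
  field_simp

theorem isLiftable_simpleReflection : M.IsLiftable (simpleReflection M) := by
  intro i j
  rcases eq_or_ne i j with rfl | hij
  · rw [M.diagonal, pow_one]
    exact LinearEquiv.ext (Module.involutive_reflection (rootForm_simpleRoot_self (M := M) i))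
  have hne_one := M.off_diagonal i j hij
  have hij_form := rootForm_simpleRoot (M := M) i j
  have hji_form := rootForm_simpleRoot (M := M) j i
  rw [M.symmetric j i] at hji_form
  generalize M i j = m at *
  set t := 2 * Real.cos (2 * Real.pi / m) with ht
  have ht' : t = rootForm M (simpleRoot i) (simpleRoot j) * rootForm M (simpleRoot j) (simpleRoot i)
      - 2 := by
    rw [hij_form, hji_form, ht, mul_div_assoc, Real.cos_two_mul]
    ring
  ext1 v
  refine (Module.reflection_mul_reflection_pow_apply _ _ m v t ht').trans ?_
  obtain ⟨p, rfl | rfl⟩ := Nat.even_or_odd' m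
  · obtain rfl | rfl | hp : p = 0 ∨ p = 1 ∨ 2 ≤ p := by omega
    · simp
    · have ht_two : t = -2 := by simp [ht]
      norm_num [hij_form, hji_form, ht_two]
      module
    · rw [show (((2 * p : ℕ) : ℤ) - 2) / 2 = p - 1 by omega,
        show (((2 * p : ℕ) : ℤ) - 1) / 2 = p - 1 by omega, ht,
        eval_S_two_mul_cos_two_pi_div_even hp]
      simp
  · rw [show (((2 * p + 1 : ℕ) : ℤ) - 2) / 2 = p - 1 by omega,
      show (((2 * p + 1 : ℕ) : ℤ) - 1) / 2 = p by omega,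
      show (((2 * p + 1 : ℕ) : ℤ) - 3) / 2 = p - 1 by omega,
      show ((2 * p + 1 : ℕ) : ℤ) / 2 = p by omega, ht,
      eval_S_add_eval_S_two_mul_cos_two_pi_div_odd (by omega)]
    simp

variable (cs : CoxeterSystem M W)

/-- The geometric representation (Tits) of a Coxeter group. -/
def geomRep : W →* ((B →₀ ℝ) ≃ₗ[ℝ] (B →₀ ℝ)) :=
  cs.lift ⟨simpleReflection M, isLiftable_simpleReflection⟩

theorem geomRep_simple_apply (i : B) (v : B →₀ ℝ) :
    geomRep cs (cs.simple i) v = v - rootForm M (simpleRoot i) v • simpleRoot i := by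
  rw [geomRep, cs.lift_apply_simple]
  exact simpleReflection_apply i v

theorem geomRep_mul_apply (x y : W) (v : B →₀ ℝ) :
    geomRep cs (x * y) v = geomRep cs x (geomRep cs y v) :=
  DFunLike.congr_fun (map_mul (geomRep cs) x y) v

theorem geomRep_simple_simpleRoot_self (i : B) :
    geomRep cs (cs.simple i) (simpleRoot i) = -simpleRoot i := by
  rw [geomRep_simple_apply, rootForm_simpleRoot_self]
  module

theorem geomRep_simple_simple_apply (j : B) (v : B →₀ ℝ) :
    geomRep cs (cs.simple j) (geomRep cs (cs.simple j) v) = v := by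
  rw [← geomRep_mul_apply, cs.simple_mul_simple_self, map_one, LinearEquiv.coe_one, id]

theorem geomRep_mul_simple_simpleRoot (w : W) (i : B) :
    geomRep cs (w * cs.simple i) (simpleRoot i) = -geomRep cs w (simpleRoot i) := by
  rw [geomRep_mul_apply, geomRep_simple_simpleRoot_self, map_neg]

theorem geomRep_simpleRoot_ne_zero (w : W) (i : B) : geomRep cs w (simpleRoot i) ≠ 0 :=
  (LinearEquiv.map_ne_zero_iff _).2 (simpleRoot_ne_zero i)

theorem rootForm_geomRep (w : W) (u v : B →₀ ℝ) :
    rootForm M (geomRep cs w u) (geomRep cs w v) = rootForm M u v := by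
  induction w using cs.simple_induction_left generalizing u v with
  | one => simp
  | mul_simple_left w i ih =>
    rw [geomRep_mul_apply, geomRep_mul_apply, ← ih u v, geomRep_simple_apply, geomRep_simple_apply]
    simp only [map_sub, map_smul, LinearMap.sub_apply, LinearMap.smul_apply, smul_eq_mul,
      rootForm_simpleRoot_self, rootForm_comm _ (simpleRoot i)]
    ring

/-! ### Positivity of roots -/

theorem geomRep_alternatingWord_simpleRoot (i j : B) (k : ℕ) :
    geomRep cs (cs.wordProd (alternatingWord i j k)) (simpleRoot i)
      = (S ℝ k).eval (2 * Real.cos (Real.pi / M i j)) • simpleRoot (if Even k then i else j)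
        + (S ℝ (k - 1)).eval (2 * Real.cos (Real.pi / M i j))
          • simpleRoot (if Even k then j else i) := by
  induction k with
  | zero => simp [alternatingWord]
  | succ k ih =>
    have hsymm := M.symmetric j i
    rw [alternatingWord_succ', cs.wordProd_cons, geomRep_mul_apply, ih, Nat.cast_succ, S_add_one,
      Polynomial.eval_sub, Polynomial.eval_mul, Polynomial.eval_X, add_sub_cancel_right]
    by_cases hk : Even k <;>
    · simp only [hk, Nat.even_add_one, not_true_eq_false, not_false_eq_true, if_true, if_false,
        map_add, map_smul, geomRep_simple_apply, rootForm_simpleRoot_self, rootForm_simpleRoot,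
        hsymm]
      module

theorem eval_S_two_mul_cos_pi_div_nonneg {m k : ℕ} (hm : m ≠ 1) (hk : m ≠ 0 → k < m) :
    0 ≤ (S ℝ k).eval (2 * Real.cos (Real.pi / m)) := by
  rcases eq_or_ne m 0 with rfl | hm₀
  · simp only [Nat.cast_zero, div_zero, Real.cos_zero, mul_one, S_eval_two, Int.cast_natCast]
    positivity
  have hm₂ : (2 : ℝ) ≤ m := mod_cast (by omega : 2 ≤ m)
  have hkm : (k : ℝ) + 1 ≤ m := mod_cast hk hm₀
  have hsin : 0 < Real.sin (Real.pi / m) :=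
    Real.sin_pos_of_pos_of_lt_pi (by positivity) (div_lt_self Real.pi_pos (by linarith))
  refine nonneg_of_mul_nonneg_left ?_ hsin
  rw [S_two_mul_real_cos, Int.cast_natCast]
  refine Real.sin_nonneg_of_nonneg_of_le_pi (by positivity) ?_
  rw [← mul_div_assoc, div_le_iff₀ (by positivity)]
  nlinarith [Real.pi_pos]

theorem isReduced_of_length_eq_add {w v : W} {ω : List B} (hw : w = v * cs.wordProd ω)
    (hlen : cs.length w = cs.length v + ω.length) : cs.IsReduced ω := by
  have h₁ := cs.length_mul_le v (cs.wordProd ω)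
  have h₂ := cs.length_wordProd_le ω
  rw [← hw] at h₁
  unfold CoxeterSystem.IsReduced
  omega

theorem exists_maximal_alternatingWord_suffix (w : W) {i j : B} (hj : cs.IsRightDescent w j) :
    ∃ v k, w = v * cs.wordProd (alternatingWord i j (k + 1)) ∧
      cs.length w = cs.length v + (k + 1) ∧
      ¬ cs.IsRightDescent v (if Even (k + 1) then j else i) := by
  let IsSuffix (k : ℕ) : Prop := ∃ v, w = v * cs.wordProd (alternatingWord i j (k + 1)) ∧
    cs.length w = cs.length v + (k + 1)
  have hzero : IsSuffix 0 :=
    ⟨w * cs.simple j, by simp [alternatingWord], ((cs.isRightDescent_iff).1 hj).symm⟩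
  have hmax : ∃ k, IsSuffix k ∧ ¬ IsSuffix (k + 1) := by
    by_contra! hsucc
    have hall : ∀ k, IsSuffix k := fun k => Nat.rec hzero hsucc k
    obtain ⟨v, -, hlen⟩ := hall (cs.length w)
    omega
  obtain ⟨k, ⟨v, hv, hlen⟩, hk⟩ := hmax
  refine ⟨v, k, hv, hlen, fun hdesc => hk ⟨v * cs.simple (if Even (k + 1) then j else i), ?_, ?_⟩⟩
  · rw [alternatingWord_succ', cs.wordProd_cons, ← mul_assoc, cs.simple_mul_simple_cancel_right]
    exact hv
  · rw [cs.isRightDescent_iff] at hdesc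
    omega

theorem not_isRightDescent_of_alternatingWord_suffix {w v : W} {i j : B} {k : ℕ}
    (hw : w = v * cs.wordProd (alternatingWord i j (k + 1)))
    (hlen : cs.length w = cs.length v + (k + 1)) :
    ¬ cs.IsRightDescent v (if Even k then j else i) := by
  intro hdesc
  rw [alternatingWord_succ', cs.wordProd_cons, ← mul_assoc] at hw
  have h₁ := cs.length_mul_le (v * cs.simple (if Even k then j else i))
    (cs.wordProd (alternatingWord i j k))
  have h₂ := cs.length_wordProd_le (alternatingWord i j k)
  rw [length_alternatingWord] at h₂
  rw [← hw] at h₁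
  rw [cs.isRightDescent_iff] at hdesc
  omega

theorem alternatingWord_suffix_lt {w v : W} {i j : B} {k : ℕ}
    (hw : w = v * cs.wordProd (alternatingWord i j (k + 1)))
    (hlen : cs.length w = cs.length v + (k + 1)) (hi : ¬ cs.IsRightDescent w i)
    (hM : M i j ≠ 0) : k + 1 < M i j := by
  by_contra! hle
  have hred : cs.IsReduced (alternatingWord i j (k + 1)) :=
    isReduced_of_length_eq_add cs hw (by rwa [length_alternatingWord])
  have heq : k + 1 = M i j :=
    le_antisymm (not_lt.1 fun h => cs.not_isReduced_alternatingWord i j hM h hred) hle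
  have hbraid : cs.wordProd (alternatingWord i j (k + 1))
      = cs.wordProd (alternatingWord i j k) * cs.simple i := by
    have h := cs.wordProd_braidWord_eq i j
    rwa [braidWord, braidWord, M.symmetric j i, ← heq, alternatingWord_succ j i,
      cs.wordProd_concat] at h
  have hshort : w * cs.simple i = v * cs.wordProd (alternatingWord i j k) := by
    rw [hw, hbraid, mul_assoc, cs.simple_mul_simple_cancel_right]
  have h₁ := cs.length_mul_le v (cs.wordProd (alternatingWord i j k))
  have h₂ := cs.length_wordProd_le (alternatingWord i j k)
  rw [length_alternatingWord] at h₂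
  rw [← hshort] at h₁
  rw [cs.not_isRightDescent_iff] at hi
  omega

theorem geomRep_simpleRoot_nonneg {w : W} {i : B} (hi : ¬ cs.IsRightDescent w i) :
    0 ≤ geomRep cs w (simpleRoot i) := by
  induction hn : cs.length w using Nat.strong_induction_on generalizing w i with
  | _ n ih =>
  rcases eq_or_ne w 1 with rfl | hw
  · simpa using simpleRoot_nonneg i
  obtain ⟨j, hj⟩ := cs.exists_rightDescent_of_ne_one hw
  have hij : i ≠ j := by rintro rfl; exact hi hj
  obtain ⟨v, k, hv, hlen, hlast⟩ := exists_maximal_alternatingWord_suffix cs (i := i) w hj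
  have hprev := not_isRightDescent_of_alternatingWord_suffix cs hv hlen
  have hlt := alternatingWord_suffix_lt cs hv hlen hi
  have hfirst := ih _ (by omega) hlast rfl
  have hsecond := ih _ (by omega) hprev rfl
  have hparity : (if Even (k + 1) then i else j) = if Even k then j else i := by
    by_cases hk : Even k <;> simp [hk, Nat.even_add_one]
  rw [hv, geomRep_mul_apply, geomRep_alternatingWord_simpleRoot, hparity, map_add, map_smul,
    map_smul, Nat.cast_succ, add_sub_cancel_right, ← Nat.cast_succ]
  have hm := M.off_diagonal i j hij
  exact add_nonneg (smul_nonneg (eval_S_two_mul_cos_pi_div_nonneg hm hlt) hsecond)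
    (smul_nonneg (eval_S_two_mul_cos_pi_div_nonneg hm fun h => (Nat.lt_succ_self k).trans (hlt h))
      hfirst)

theorem geomRep_simpleRoot_nonpos {w : W} {i : B} (hi : cs.IsRightDescent w i) :
    geomRep cs w (simpleRoot i) ≤ 0 := by
  have h := geomRep_simpleRoot_nonneg cs (cs.isRightDescent_iff_not_isRightDescent_mul.1 hi)
  rwa [geomRep_mul_simple_simpleRoot, Left.nonneg_neg_iff] at h

theorem geomRep_simpleRoot_nonneg_iff {w : W} {i : B} :
    0 ≤ geomRep cs w (simpleRoot i) ↔ ¬ cs.IsRightDescent w i :=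
  ⟨fun h hi => geomRep_simpleRoot_ne_zero cs w i (le_antisymm (geomRep_simpleRoot_nonpos cs hi) h),
    geomRep_simpleRoot_nonneg cs⟩

theorem simple_injective : Function.Injective cs.simple := by
  intro i j hij
  by_contra hne
  have h := geomRep_simpleRoot_nonpos cs (w := cs.simple i) (i := j) (by
    rw [hij, CoxeterSystem.IsRightDescent]; simp)
  rw [geomRep_simple_apply] at h
  have hcoeff := h j
  simp only [simpleRoot, Finsupp.coe_sub, Finsupp.coe_smul, Pi.sub_apply, Pi.smul_apply,
    Finsupp.single_eq_same, Finsupp.single_eq_of_ne' hne, Finsupp.coe_zero, Pi.zero_apply,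
    smul_zero, sub_zero] at hcoeff
  linarith

end

section

variable {B' W' B W : Type*} [Group W'] [Group W] {M' : CoxeterMatrix B'} {M : CoxeterMatrix B}

/-! ### Embeddings of Coxeter diagrams -/

/-- An embedding of Coxeter systems that identifies the diagram of the source with a full
subdiagram of the target. -/
structure DiagramEmbedding (cs' : CoxeterSystem M' W') (cs : CoxeterSystem M W) where
  /-- the homomorphism of Coxeter groups -/
  toHom : W' →* W
  /-- the map on the vertices of the diagrams -/
  onVertices : B' ↪ B
  map_simple : ∀ i, toHom (cs'.simple i) = cs.simple (onVertices i)
  matrix_apply : ∀ i j, M (onVertices i) (onVertices j) = M' i j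

namespace DiagramEmbedding

variable {cs' : CoxeterSystem M' W'} {cs : CoxeterSystem M W} (φ : DiagramEmbedding cs' cs)

theorem rootForm_mapDomain (u v : B' →₀ ℝ) :
    rootForm M (u.mapDomain φ.onVertices) (v.mapDomain φ.onVertices) = rootForm M' u v := by
  suffices (rootForm M).compl₁₂ (Finsupp.lmapDomain ℝ ℝ φ.onVertices)
      (Finsupp.lmapDomain ℝ ℝ φ.onVertices) = rootForm M' from LinearMap.congr_fun₂ this u v
  ext i j
  simp [rootForm, φ.matrix_apply]

theorem mapDomain_simpleRoot (i : B') :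
    (simpleRoot i).mapDomain φ.onVertices = simpleRoot (φ.onVertices i) :=
  Finsupp.mapDomain_single

theorem geomRep_mapDomain (w : W') (v : B' →₀ ℝ) :
    geomRep cs (φ.toHom w) (v.mapDomain φ.onVertices)
      = (geomRep cs' w v).mapDomain φ.onVertices := by
  induction w using cs'.simple_induction_left with
  | one => simp
  | mul_simple_left w i ih =>
    rw [map_mul, geomRep_mul_apply, ih, φ.map_simple, geomRep_simple_apply,
      ← φ.mapDomain_simpleRoot, φ.rootForm_mapDomain, geomRep_mul_apply, geomRep_simple_apply,
      sub_eq_add_neg, sub_eq_add_neg, ← neg_smul, ← neg_smul, Finsupp.mapDomain_add,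
      Finsupp.mapDomain_smul]

theorem mapDomain_nonneg_iff {v : B' →₀ ℝ} : 0 ≤ v.mapDomain φ.onVertices ↔ 0 ≤ v := by
  refine ⟨fun h i => ?_, fun h => Finsupp.mapDomain_nonneg h⟩
  simpa [Finsupp.mapDomain_apply φ.onVertices.injective] using h (φ.onVertices i)

theorem isRightDescent_iff {w : W'} {i : B'} :
    cs.IsRightDescent (φ.toHom w) (φ.onVertices i) ↔ cs'.IsRightDescent w i := by
  rw [← not_iff_not, ← geomRep_simpleRoot_nonneg_iff cs, ← geomRep_simpleRoot_nonneg_iff cs',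
    ← φ.mapDomain_nonneg_iff, ← φ.geomRep_mapDomain, φ.mapDomain_simpleRoot]

theorem length_map (w : W') : cs.length (φ.toHom w) = cs'.length w := by
  induction hn : cs'.length w generalizing w with
  | zero => rw [cs'.length_eq_zero_iff.1 hn, map_one, cs.length_one]
  | succ n ih =>
    obtain ⟨i, hi⟩ := cs'.exists_rightDescent_of_ne_one (w := w) (by rintro rfl; simp at hn)
    have hdesc := cs.isRightDescent_iff.1 (φ.isRightDescent_iff.2 hi)
    rw [cs'.isRightDescent_iff] at hi
    rw [← φ.map_simple, ← map_mul, ih _ (by omega)] at hdesc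
    exact hdesc.symm

theorem injective : Function.Injective φ.toHom := by
  refine (injective_iff_map_eq_one _).2 fun w hw => ?_
  rw [← cs'.length_eq_zero_iff, ← φ.length_map, hw, cs.length_one]

end DiagramEmbedding

/-! ### Standard parabolic subgroups -/

variable (cs : CoxeterSystem M W) (J : Set B)

/-- The standard parabolic subgroup `W_J`. -/
def parabolic : Subgroup W :=
  Subgroup.closure (cs.simple '' J)

variable (M) in
/-- The Coxeter matrix of the full subdiagram on `J`. -/
def restrictMatrix : CoxeterMatrix J where
  M := M.M.submatrix (↑) (↑)
  isSymm := M.isSymm.submatrix _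
  diagonal i := M.diagonal i
  off_diagonal i j hij := M.off_diagonal i j (Subtype.coe_injective.ne hij)

/-- The abstract Coxeter group of the subdiagram `J`, mapped onto `W_J`. -/
def parabolicEmbedding : DiagramEmbedding (restrictMatrix M J).toCoxeterSystem cs where
  toHom := (restrictMatrix M J).toCoxeterSystem.lift
    ⟨fun i => cs.simple i, fun i j => cs.simple_mul_simple_pow i j⟩
  onVertices := Function.Embedding.subtype _
  map_simple i := (restrictMatrix M J).toCoxeterSystem.lift_apply_simple _ i
  matrix_apply _ _ := rfl

theorem range_parabolicEmbedding : (parabolicEmbedding cs J).toHom.range = parabolic cs J := by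
  rw [parabolic, MonoidHom.range_eq_map,
    ← (restrictMatrix M J).toCoxeterSystem.subgroup_closure_range_simple,
    MonoidHom.map_closure, ← Set.range_comp, Set.image_eq_range]
  congr! 2
  exact funext (parabolicEmbedding cs J).map_simple

end

section

variable {B W : Type*} [Group W] {M : CoxeterMatrix B} (cs : CoxeterSystem M W)

/-! ### Descents and minimal coset representatives -/

theorem neg_one_pow_length_mul {R : Type*} [Ring R] (x y : W) :
    (-1 : R) ^ cs.length (x * y) = (-1) ^ cs.length x * (-1) ^ cs.length y := by
  rw [← pow_add, neg_one_pow_eq_pow_mod_two, cs.length_mul_mod_two, ← neg_one_pow_eq_pow_mod_two]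

variable {J : Set B}

theorem simple_mem_parabolic {j : B} (hj : j ∈ J) : cs.simple j ∈ parabolic cs J :=
  Subgroup.subset_closure (Set.mem_image_of_mem _ hj)

theorem parabolic_mono {I J : Set B} (h : I ⊆ J) : parabolic cs I ≤ parabolic cs J :=
  Subgroup.closure_mono (Set.image_mono h)

theorem parabolic_univ : parabolic cs Set.univ = ⊤ := by
  rw [parabolic, Set.image_univ, cs.subgroup_closure_range_simple]

theorem parabolic_empty : parabolic cs ∅ = ⊥ := by
  rw [parabolic, Set.image_empty, Subgroup.closure_empty]

theorem geomRep_apply_apply_of_notMem {w : W} (hw : w ∈ parabolic cs J) (v : B →₀ ℝ) {i : B}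
    (hi : i ∉ J) : geomRep cs w v i = v i := by
  induction hw using Subgroup.closure_induction_left generalizing v with
  | one => simp
  | mul_left x hx y _ ih =>
    obtain ⟨j, hj, rfl⟩ := hx
    have hji : j ≠ i := fun h => hi (h ▸ hj)
    rw [geomRep_mul_apply, geomRep_simple_apply, ← ih v]
    simp [simpleRoot, hji]
  | inv_mul_cancel x hx y _ ih =>
    obtain ⟨j, hj, rfl⟩ := hx
    have hji : j ≠ i := fun h => hi (h ▸ hj)
    rw [cs.inv_simple, geomRep_mul_apply, geomRep_simple_apply, ← ih v]
    simp [simpleRoot, hji]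

theorem mem_of_isRightDescent_of_mem_parabolic {w : W} (hw : w ∈ parabolic cs J) {i : B}
    (hi : cs.IsRightDescent w i) : i ∈ J := by
  by_contra hiJ
  have h := geomRep_simpleRoot_nonpos cs hi i
  rw [geomRep_apply_apply_of_notMem cs hw _ hiJ] at h
  simp only [simpleRoot, Finsupp.single_eq_same, Finsupp.coe_zero, Pi.zero_apply] at h
  linarith

theorem parabolic_induction {p : (w : W) → w ∈ parabolic cs J → Prop} (one : p 1 (one_mem _))
    (mul_simple : ∀ w (hw : w ∈ parabolic cs J) j (hj : j ∈ J), ¬ cs.IsRightDescent w j → p w hw →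
      p (w * cs.simple j) (mul_mem hw (simple_mem_parabolic cs hj)))
    {w : W} (hw : w ∈ parabolic cs J) : p w hw := by
  induction hn : cs.length w generalizing w with
  | zero =>
    obtain rfl := cs.length_eq_zero_iff.1 hn
    exact one
  | succ n ih =>
    obtain ⟨j, hj⟩ := cs.exists_rightDescent_of_ne_one (w := w) (by rintro rfl; simp at hn)
    have hjJ := mem_of_isRightDescent_of_mem_parabolic cs hw hj
    have hmem := mul_mem hw (simple_mem_parabolic cs hjJ)
    have hlen := cs.isRightDescent_iff.1 hj
    have h := mul_simple _ hmem j hjJ (cs.isRightDescent_iff_not_isRightDescent_mul.1 hj)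
      (ih hmem (by omega))
    simpa only [cs.simple_mul_simple_cancel_right] using h

theorem map_nonneg_of_forall_simpleRoot {f : (B →₀ ℝ) →ₗ[ℝ] (B →₀ ℝ)}
    (hf : ∀ j ∈ J, 0 ≤ f (simpleRoot j)) {v : B →₀ ℝ} (hv : 0 ≤ v)
    (hvJ : ∀ i ∉ J, v i = 0) : 0 ≤ f v := by
  have hsum : v = v.sum fun i c => c • simpleRoot i := by
    simp [simpleRoot, Finsupp.sum_single]
  rw [hsum, map_finsuppSum]
  refine Finset.sum_nonneg fun i hi => ?_
  change 0 ≤ f (v i • simpleRoot i)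
  rw [map_smul]
  exact smul_nonneg (hv i) (hf i (by_contra fun h => Finsupp.mem_support_iff.1 hi (hvJ i h)))

theorem geomRep_nonneg_of_no_descents {w : W} (hw : ∀ j ∈ J, ¬ cs.IsRightDescent w j)
    {v : B →₀ ℝ} (hv : 0 ≤ v) (hvJ : ∀ i ∉ J, v i = 0) : 0 ≤ geomRep cs w v :=
  map_nonneg_of_forall_simpleRoot (f := (geomRep cs w).toLinearMap)
    (fun j hj => geomRep_simpleRoot_nonneg cs (hw j hj)) hv hvJ

theorem geomRep_nonpos_of_all_descents {w : W} (hw : ∀ j ∈ J, cs.IsRightDescent w j)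
    {v : B →₀ ℝ} (hv : 0 ≤ v) (hvJ : ∀ i ∉ J, v i = 0) : geomRep cs w v ≤ 0 :=
  neg_nonneg.1 <| map_nonneg_of_forall_simpleRoot (f := -(geomRep cs w).toLinearMap)
    (fun j hj => neg_nonneg.2 (geomRep_simpleRoot_nonpos cs (hw j hj))) hv hvJ

theorem geomRep_simpleRoot_apply_of_notMem {w : W} (hw : w ∈ parabolic cs J) {j : B} (hj : j ∈ J)
    (i : B) (hi : i ∉ J) : geomRep cs w (simpleRoot j) i = 0 := by
  rw [geomRep_apply_apply_of_notMem cs hw _ hi]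
  exact Finsupp.single_eq_of_ne fun h => hi (h ▸ hj)

theorem length_mul_of_no_descents {y z : W} (hy : ∀ j ∈ J, ¬ cs.IsRightDescent y j)
    (hz : z ∈ parabolic cs J) : cs.length (y * z) = cs.length y + cs.length z := by
  induction hz using parabolic_induction with
  | one => simp
  | mul_simple z hz j hj hdesc ih =>
    have hdesc' : ¬ cs.IsRightDescent (y * z) j := by
      rw [← geomRep_simpleRoot_nonneg_iff, geomRep_mul_apply]
      exact geomRep_nonneg_of_no_descents cs hy (geomRep_simpleRoot_nonneg cs hdesc)
        (geomRep_simpleRoot_apply_of_notMem cs hz hj)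
    rw [cs.not_isRightDescent_iff] at hdesc hdesc'
    rw [← mul_assoc, hdesc, hdesc', ih, add_assoc]

theorem length_mul_of_all_descents {y z : W} (hy : ∀ j ∈ J, cs.IsRightDescent y j)
    (hz : z ∈ parabolic cs J) : cs.length (y * z) + cs.length z = cs.length y := by
  induction hz using parabolic_induction with
  | one => simp
  | mul_simple z hz j hj hdesc ih =>
    have hdesc' : cs.IsRightDescent (y * z) j := by
      by_contra h
      rw [← geomRep_simpleRoot_nonneg_iff, geomRep_mul_apply] at h
      refine geomRep_simpleRoot_ne_zero cs (y * z) j (le_antisymm ?_ ?_) <;> rw [geomRep_mul_apply]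
      · exact geomRep_nonpos_of_all_descents cs hy (geomRep_simpleRoot_nonneg cs hdesc)
          (geomRep_simpleRoot_apply_of_notMem cs hz hj)
      · exact h
    rw [cs.isRightDescent_iff] at hdesc'
    rw [cs.not_isRightDescent_iff] at hdesc
    rw [← mul_assoc]
    omega

theorem exists_mul_no_descents (J : Set B) (w : W) :
    ∃ z ∈ parabolic cs J, ∀ j ∈ J, ¬ cs.IsRightDescent (w * z) j := by
  induction hn : cs.length w using Nat.strong_induction_on generalizing w with
  | _ n ih =>
  by_cases h : ∃ j ∈ J, cs.IsRightDescent w j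
  · obtain ⟨j, hj, hdesc⟩ := h
    obtain ⟨z, hz, hmin⟩ := ih _ (hn ▸ hdesc) (w * cs.simple j) rfl
    exact ⟨cs.simple j * z, mul_mem (simple_mem_parabolic cs hj) hz, by rwa [← mul_assoc]⟩
  · push Not at h
    exact ⟨1, one_mem _, by rwa [mul_one]⟩

theorem eq_one_of_mul_no_descents {y z : W} (hy : ∀ j ∈ J, ¬ cs.IsRightDescent y j)
    (hz : z ∈ parabolic cs J) (hyz : ∀ j ∈ J, ¬ cs.IsRightDescent (y * z) j) : z = 1 := by
  have h := length_mul_of_no_descents cs hyz (inv_mem hz)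
  rw [mul_inv_cancel_right, length_mul_of_no_descents cs hy hz] at h
  exact cs.length_eq_zero_iff.1 (by omega)

/-! ### Roots of a parabolic subgroup -/

/-- The root system of `W_J`, as a subset of the root system of `W`. -/
def roots (J : Set B) : Set (B →₀ ℝ) :=
  {β | ∃ w ∈ parabolic cs J, ∃ j ∈ J, β = geomRep cs w (simpleRoot j)}

theorem simpleRoot_mem_roots {j : B} (hj : j ∈ J) : simpleRoot j ∈ roots cs J :=
  ⟨1, one_mem _, j, hj, by simp⟩

variable {cs} in
theorem geomRep_mem_roots {β : B →₀ ℝ} (hβ : β ∈ roots cs J) {w : W} (hw : w ∈ parabolic cs J) :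
    geomRep cs w β ∈ roots cs J := by
  obtain ⟨x, hx, j, hj, rfl⟩ := hβ
  exact ⟨w * x, mul_mem hw hx, j, hj, (geomRep_mul_apply cs w x _).symm⟩

variable {cs} in
theorem rootForm_self_of_mem_roots {β : B →₀ ℝ} (hβ : β ∈ roots cs J) : rootForm M β β = 2 := by
  obtain ⟨w, -, j, -, rfl⟩ := hβ
  rw [rootForm_geomRep, rootForm_simpleRoot_self]

variable {cs} in
theorem ne_zero_of_mem_roots {β : B →₀ ℝ} (hβ : β ∈ roots cs J) : β ≠ 0 := by
  obtain ⟨w, -, j, -, rfl⟩ := hβ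
  exact geomRep_simpleRoot_ne_zero cs w j

variable {cs} in
theorem nonneg_or_nonpos_of_mem_roots {β : B →₀ ℝ} (hβ : β ∈ roots cs J) : 0 ≤ β ∨ β ≤ 0 := by
  obtain ⟨w, -, j, -, rfl⟩ := hβ
  by_cases h : cs.IsRightDescent w j
  · exact Or.inr (geomRep_simpleRoot_nonpos cs h)
  · exact Or.inl (geomRep_simpleRoot_nonneg cs h)

variable {cs} in
theorem apply_eq_zero_of_mem_roots {β : B →₀ ℝ} (hβ : β ∈ roots cs J) (i : B) (hi : i ∉ J) :
    β i = 0 := by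
  obtain ⟨w, hw, j, hj, rfl⟩ := hβ
  exact geomRep_simpleRoot_apply_of_notMem cs hw hj i hi

variable {cs} in
theorem eq_of_eq_smul_of_mem_roots {β γ : B →₀ ℝ} (hβ : β ∈ roots cs J) (hγ : γ ∈ roots cs J)
    {c : ℝ} (hc : 0 ≤ c) (h : γ = c • β) : γ = β := by
  have hnorm := rootForm_self_of_mem_roots hγ
  rw [h, map_smul, map_smul, LinearMap.smul_apply, rootForm_self_of_mem_roots hβ, smul_eq_mul,
    smul_eq_mul] at hnorm
  rw [h, show c = 1 by nlinarith, one_smul]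

variable {cs} in
theorem geomRep_simple_nonneg_of_mem_roots {β : B →₀ ℝ} (hβ : β ∈ roots cs J) (hpos : 0 ≤ β) {j : B}
    (hj : j ∈ J) (hne : β ≠ simpleRoot j) : 0 ≤ geomRep cs (cs.simple j) β := by
  have hmem := geomRep_mem_roots hβ (simple_mem_parabolic cs hj)
  refine (nonneg_or_nonpos_of_mem_roots hmem).resolve_right fun hneg => hne ?_
  refine eq_of_eq_smul_of_mem_roots (simpleRoot_mem_roots cs hj) hβ (hpos j) ?_
  refine Finsupp.ext fun i => ?_
  rcases eq_or_ne j i with rfl | hji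
  · simp [simpleRoot]
  · have h := hneg i
    rw [geomRep_simple_apply] at h
    simp only [simpleRoot, Finsupp.coe_sub, Finsupp.coe_smul, Pi.sub_apply, Pi.smul_apply,
      Finsupp.single_eq_of_ne hji.symm, smul_zero, sub_zero, Finsupp.coe_zero, Pi.zero_apply] at h ⊢
    exact le_antisymm h (hpos i)

end

section

variable {B W : Type*} [Group W] {M : CoxeterMatrix B} (cs : CoxeterSystem M W) {J : Set B}

/-! ### Longest elements -/

/-- The longest element of `W_J`, characterised by having all of `J` as descents. -/
def IsLongest (J : Set B) (w : W) : Prop :=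
  w ∈ parabolic cs J ∧ ∀ j ∈ J, cs.IsRightDescent w j

theorem isLongest_of_forall_length_le {w : W} (hw : w ∈ parabolic cs J)
    (hmax : ∀ u ∈ parabolic cs J, cs.length u ≤ cs.length w) : IsLongest cs J w := by
  refine ⟨hw, fun j hj => by_contra fun hdesc => ?_⟩
  have h := hmax _ (mul_mem hw (simple_mem_parabolic cs hj))
  rw [cs.not_isRightDescent_iff.1 hdesc] at h
  omega

theorem exists_isLongest [Finite W] (J : Set B) : ∃ w, IsLongest cs J w := by
  obtain ⟨w, hw, hmax⟩ := (Set.toFinite (parabolic cs J : Set W)).exists_maximalFor cs.length _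
    ⟨1, one_mem _⟩
  exact ⟨w, isLongest_of_forall_length_le cs hw fun u hu =>
    (le_total _ _).elim id fun h => hmax hu h⟩

variable {cs} in
theorem IsLongest.length_mul {w z : W} (hw : IsLongest cs J w) (hz : z ∈ parabolic cs J) :
    cs.length (w * z) + cs.length z = cs.length w :=
  length_mul_of_all_descents cs hw.2 hz

variable {cs} in
theorem IsLongest.unique {w w' : W} (hw : IsLongest cs J w) (hw' : IsLongest cs J w') :
    w = w' := by
  have h := hw.length_mul (mul_mem (inv_mem hw.1) hw'.1)
  have h' := hw'.length_mul (mul_mem (inv_mem hw'.1) hw.1)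
  rw [mul_inv_cancel_left] at h h'
  exact inv_mul_eq_one.1 (cs.length_eq_zero_iff.1 (by omega))

/-! ### Counting roots -/

section Finite

variable [Finite W]

include cs in
theorem finite_of_coxeterSystem : Finite B :=
  Finite.of_injective _ (simple_injective cs)

theorem roots_finite (J : Set B) : (roots cs J).Finite := by
  have := finite_of_coxeterSystem cs
  refine (Set.finite_range fun p : W × B => geomRep cs p.1 (simpleRoot p.2)).subset ?_
  rintro _ ⟨w, -, j, -, rfl⟩
  exact ⟨(w, j), rfl⟩

/-- The positive roots of `W_J`. -/
def posRoots (J : Set B) : Finset (B →₀ ℝ) :=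
  {β ∈ (roots_finite cs J).toFinset | 0 ≤ β}

theorem mem_posRoots {β : B →₀ ℝ} : β ∈ posRoots cs J ↔ β ∈ roots cs J ∧ 0 ≤ β := by
  simp [posRoots]

theorem simpleRoot_mem_posRoots {j : B} (hj : j ∈ J) : simpleRoot j ∈ posRoots cs J :=
  (mem_posRoots cs).2 ⟨simpleRoot_mem_roots cs hj, simpleRoot_nonneg j⟩

theorem card_posRoots_pos (hJ : J.Nonempty) : 0 < (posRoots cs J).card := by
  obtain ⟨j, hj⟩ := hJ
  exact Finset.card_pos.2 ⟨_, simpleRoot_mem_posRoots cs hj⟩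

theorem geomRep_simple_mem_posRoots {β : B →₀ ℝ} (hβ : β ∈ posRoots cs J) {j : B} (hj : j ∈ J)
    (hne : β ≠ simpleRoot j) : geomRep cs (cs.simple j) β ∈ posRoots cs J := by
  rw [mem_posRoots] at hβ ⊢
  exact ⟨geomRep_mem_roots hβ.1 (simple_mem_parabolic cs hj),
    geomRep_simple_nonneg_of_mem_roots hβ.1 hβ.2 hj hne⟩

/-- The positive roots of `W_J` that `w` makes negative. -/
def inversions (J : Set B) (w : W) : Finset (B →₀ ℝ) :=
  {β ∈ posRoots cs J | ¬ 0 ≤ geomRep cs w β}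

theorem inversions_mul_simple {w : W} {j : B} (hj : j ∈ J) (hdesc : ¬ cs.IsRightDescent w j) :
    inversions cs J (w * cs.simple j)
      = insert (simpleRoot j) ((inversions cs J w).image (geomRep cs (cs.simple j))) := by
  have hwj := geomRep_simpleRoot_nonneg cs hdesc
  ext β
  simp only [inversions, Finset.mem_filter, Finset.mem_insert, Finset.mem_image]
  constructor
  · rintro ⟨hβ, hneg⟩
    refine or_iff_not_imp_left.2 fun hne => ⟨geomRep cs (cs.simple j) β,
      ⟨geomRep_simple_mem_posRoots cs hβ hj hne, ?_⟩, geomRep_simple_simple_apply cs j β⟩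
    rwa [← geomRep_mul_apply]
  · rintro (rfl | ⟨γ, ⟨hγ, hneg⟩, rfl⟩)
    · refine ⟨simpleRoot_mem_posRoots cs hj, fun h => ?_⟩
      rw [geomRep_mul_simple_simpleRoot, Left.nonneg_neg_iff] at h
      exact geomRep_simpleRoot_ne_zero cs w j (le_antisymm h hwj)
    · refine ⟨geomRep_simple_mem_posRoots cs hγ hj ?_, ?_⟩
      · rintro rfl
        exact hneg hwj
      · rwa [geomRep_mul_apply, geomRep_simple_simple_apply]

theorem card_inversions {w : W} (hw : w ∈ parabolic cs J) :
    (inversions cs J w).card = cs.length w := by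
  induction hw using parabolic_induction with
  | one =>
    simp +contextual [inversions, Finset.filter_eq_empty_iff, mem_posRoots]
  | mul_simple w hw j hj hdesc ih =>
    rw [inversions_mul_simple cs hj hdesc, Finset.card_insert_of_notMem,
      Finset.card_image_of_injective _ (LinearEquiv.injective _), ih,
      cs.not_isRightDescent_iff.1 hdesc]
    intro hmem
    obtain ⟨γ, hγ, hγj⟩ := Finset.mem_image.1 hmem
    have hγpos := ((mem_posRoots cs).1 (Finset.mem_filter.1 hγ).1).2
    rw [← geomRep_simple_simple_apply cs j γ, hγj, geomRep_simple_simpleRoot_self,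
      Left.nonneg_neg_iff] at hγpos
    exact simpleRoot_ne_zero j (le_antisymm hγpos (simpleRoot_nonneg j))

variable {cs} in
theorem IsLongest.card_posRoots {w : W} (hw : IsLongest cs J w) :
    (posRoots cs J).card = cs.length w := by
  rw [← card_inversions cs hw.1, inversions, Finset.filter_true_of_mem]
  intro β hβ hpos
  rw [mem_posRoots] at hβ
  have hne : geomRep cs w β ≠ 0 := (LinearEquiv.map_ne_zero_iff _).2 (ne_zero_of_mem_roots hβ.1)
  exact hne (le_antisymm (geomRep_nonpos_of_all_descents cs hw.2 hβ.2
    (apply_eq_zero_of_mem_roots hβ.1)) hpos)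

end Finite

end

section

variable {B W : Type*} [Group W] {M : CoxeterMatrix B} {cs : CoxeterSystem M W}

/-! ### Diagram automorphisms -/

variable (cs) in
/-- An automorphism of a Coxeter system, recorded by its actions on the group and on the vertices
of the diagram. -/
structure DiagramAut where
  /-- the automorphism of the Coxeter group -/
  toMulEquiv : W ≃* W
  /-- the permutation of the vertices -/
  perm : Equiv.Perm B
  map_simple : ∀ i, toMulEquiv (cs.simple i) = cs.simple (perm i)
  matrix_apply : ∀ i j, M (perm i) (perm j) = M i j

namespace DiagramAut

variable (cs) in
/-- The identity automorphism. -/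
def refl : DiagramAut cs where
  toMulEquiv := MulEquiv.refl W
  perm := 1
  map_simple _ := rfl
  matrix_apply _ _ := rfl

variable (σ : DiagramAut cs)

/-- The embedding of the Coxeter system into itself given by an automorphism. -/
def toEmbedding : DiagramEmbedding cs cs where
  toHom := σ.toMulEquiv.toMonoidHom
  onVertices := σ.perm.toEmbedding
  map_simple := σ.map_simple
  matrix_apply := σ.matrix_apply

/-- The permutation of the simple roots, extended linearly. -/
def onRoots : (B →₀ ℝ) ≃ₗ[ℝ] (B →₀ ℝ) :=
  Finsupp.domLCongr σ.perm

theorem onRoots_simpleRoot (i : B) : σ.onRoots (simpleRoot i) = simpleRoot (σ.perm i) :=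
  Finsupp.domLCongr_single σ.perm i 1

theorem onRoots_apply (v : B →₀ ℝ) : σ.onRoots v = v.mapDomain σ.perm :=
  Finsupp.equivMapDomain_eq_mapDomain σ.perm v

theorem geomRep_onRoots (w : W) (v : B →₀ ℝ) :
    geomRep cs (σ.toMulEquiv w) (σ.onRoots v) = σ.onRoots (geomRep cs w v) := by
  rw [onRoots_apply, onRoots_apply]
  exact σ.toEmbedding.geomRep_mapDomain w v

theorem onRoots_nonneg_iff {v : B →₀ ℝ} : 0 ≤ σ.onRoots v ↔ 0 ≤ v := by
  rw [onRoots_apply]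
  exact σ.toEmbedding.mapDomain_nonneg_iff

theorem isRightDescent_iff {w : W} {i : B} :
    cs.IsRightDescent (σ.toMulEquiv w) (σ.perm i) ↔ cs.IsRightDescent w i :=
  σ.toEmbedding.isRightDescent_iff

/-- The orbits of an automorphism on the vertices of the diagram. -/
def Orbit : Type _ :=
  Quotient (Equiv.Perm.SameCycle.setoid σ.perm)

/-- The stable set of vertices that is the union of the orbits in `T`. -/
def union (T : Finset σ.Orbit) : Set B :=
  {i | (Quotient.mk _ i : σ.Orbit) ∈ T}

theorem union_mono {T T' : Finset σ.Orbit} (h : T ⊆ T') : σ.union T ⊆ σ.union T' :=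
  fun _ hi => h hi

theorem union_empty : σ.union ∅ = ∅ :=
  Set.eq_empty_of_forall_notMem fun _ hi => Finset.notMem_empty _ hi

theorem union_univ [Fintype σ.Orbit] : σ.union Finset.univ = Set.univ :=
  Set.eq_univ_of_forall fun _ => Finset.mem_univ _

theorem perm_mem_union {T : Finset σ.Orbit} {i : B} : σ.perm i ∈ σ.union T ↔ i ∈ σ.union T := by
  have h : (Quotient.mk _ (σ.perm i) : σ.Orbit) = Quotient.mk _ i :=
    Quotient.sound (Equiv.Perm.sameCycle_apply_left.2 (Equiv.Perm.SameCycle.refl _ _))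
  rw [union, Set.mem_ofPred_eq, Set.mem_ofPred_eq, h]

theorem union_singleton_subset [Finite B] {X : Set B} (hX : ∀ i ∈ X, σ.perm i ∈ X) {i : B}
    (hi : i ∈ X) : σ.union {(Quotient.mk _ i : σ.Orbit)} ⊆ X := by
  intro j hj
  obtain ⟨n, -, rfl⟩ := (Quotient.exact (Finset.mem_singleton.1 hj)).symm.exists_pow_eq'
  clear hj
  induction n with
  | zero => exact hi
  | succ n ih =>
    rw [pow_succ']
    exact hX _ ih

theorem union_nonempty {T : Finset σ.Orbit} (hT : T.Nonempty) : (σ.union T).Nonempty := by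
  obtain ⟨ω, hω⟩ := hT
  induction ω using Quotient.inductionOn with
  | _ i => exact ⟨i, hω⟩

theorem map_parabolic (J : Set B) :
    (parabolic cs J).map σ.toMulEquiv.toMonoidHom = parabolic cs (σ.perm '' J) := by
  rw [parabolic, parabolic, MonoidHom.map_closure, ← Set.image_comp, ← Set.image_comp]
  congr 2
  exact funext σ.map_simple

theorem image_union (T : Finset σ.Orbit) : σ.perm '' σ.union T = σ.union T := by
  rw [σ.perm.image_eq_preimage_symm]
  ext i
  rw [Set.mem_preimage, ← perm_mem_union, Equiv.apply_symm_apply]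

theorem map_mem_parabolic_union {T : Finset σ.Orbit} {w : W} :
    σ.toMulEquiv w ∈ parabolic cs (σ.union T) ↔ w ∈ parabolic cs (σ.union T) := by
  conv_lhs => rw [← image_union, ← map_parabolic]
  exact Subgroup.mem_map_equiv.trans (by rw [MulEquiv.symm_apply_apply])

end DiagramAut

end

/-! ### Graded traces on polynomial rings -/

section

open MvPolynomial

variable {B R : Type*} [CommRing R]

theorem homogeneousComponent_mul {p q : MvPolynomial B R} {N : ℕ} (hp : p.IsHomogeneous N)
    (d : ℕ) : homogeneousComponent (N + d) (p * q) = p * homogeneousComponent d q := by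
  let _ := MvPolynomial.gradedAlgebra (σ := B) (R := R)
  have h := DirectSum.coe_decompose_mul_add_of_left_mem (homogeneousSubmodule B R)
    (j := d) (b := q) hp
  rwa [← decomposition.decompose'_apply (p * q), ← decomposition.decompose'_apply q]

theorem isHomogeneous_of_mul_left [IsDomain R] {p q : MvPolynomial B R} {N d : ℕ}
    (hp : p.IsHomogeneous N) (hp₀ : p ≠ 0) (h : (p * q).IsHomogeneous (d + N)) :
    q.IsHomogeneous d := by
  have hq : homogeneousComponent d q = q := mul_left_cancel₀ hp₀ <| by
    rw [← homogeneousComponent_mul hp, add_comm, homogeneousComponent_eq_self h]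
  exact hq ▸ homogeneousComponent_isHomogeneous d q

theorem eq_zero_of_mul_isHomogeneous_of_lt [IsDomain R] {p q : MvPolynomial B R} {N d : ℕ}
    (hp : p.IsHomogeneous N) (hp₀ : p ≠ 0) (h : (p * q).IsHomogeneous d) (hd : d < N) :
    q = 0 := by
  by_contra hq
  have hdeg := h.totalDegree (mul_ne_zero hp₀ hq)
  rw [totalDegree_mul_of_isDomain hp₀ hq, hp.totalDegree hp₀] at hdeg
  omega

section GradedTrace

variable [Fintype B]

theorem mem_finsuppAntidiag_univ {d : ℕ} {m : B →₀ ℕ} :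
    m ∈ Finset.finsuppAntidiag Finset.univ d ↔ m.degree = d := by
  simp [Finset.mem_finsuppAntidiag, Finsupp.degree_eq_sum]

theorem isHomogeneous_monomial_one {d : ℕ} {m : B →₀ ℕ}
    (hm : m ∈ Finset.finsuppAntidiag Finset.univ d) : (monomial m (1 : R)).IsHomogeneous d :=
  isHomogeneous_monomial _ (mem_finsuppAntidiag_univ.1 hm)

theorem eq_sum_monomial_of_isHomogeneous {d : ℕ} {f : MvPolynomial B R} (hf : f.IsHomogeneous d) :
    f = ∑ m ∈ Finset.finsuppAntidiag Finset.univ d, coeff m f • monomial m (1 : R) := by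
  ext n
  simp only [coeff_sum, coeff_smul, coeff_monomial, smul_eq_mul, mul_ite, mul_one, mul_zero,
    Finset.sum_ite_eq', mem_finsuppAntidiag_univ]
  split_ifs with h
  · rfl
  · exact hf.coeff_eq_zero h

/-- The series `∑_d tr(φ_d) q^d`, where `φ_d` is the degree `d` diagonal block of an endomorphism
`φ` of the polynomial ring; its trace is computed in the basis of monomials. -/
def gradedTrace : (MvPolynomial B R →ₗ[R] MvPolynomial B R) →ₗ[R] PowerSeries R where
  toFun φ := PowerSeries.mk fun d =>
    ∑ m ∈ Finset.finsuppAntidiag Finset.univ d, coeff m (φ (monomial m 1))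
  map_add' φ ψ := by ext; simp [Finset.sum_add_distrib]
  map_smul' c φ := by ext; simp [Finset.mul_sum]

theorem coeff_gradedTrace (d : ℕ) (φ : MvPolynomial B R →ₗ[R] MvPolynomial B R) :
    PowerSeries.coeff d (gradedTrace φ)
      = ∑ m ∈ Finset.finsuppAntidiag Finset.univ d, coeff m (φ (monomial m 1)) := by
  simp [gradedTrace]

theorem coeff_gradedTrace_comp {i j : ℕ} {φ ψ : MvPolynomial B R →ₗ[R] MvPolynomial B R}
    (hφ : ∀ f, f.IsHomogeneous i → (φ f).IsHomogeneous j) :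
    PowerSeries.coeff i (gradedTrace (ψ ∘ₗ φ))
      = ∑ m ∈ Finset.finsuppAntidiag Finset.univ i, ∑ n ∈ Finset.finsuppAntidiag Finset.univ j,
        coeff n (φ (monomial m 1)) * coeff m (ψ (monomial n 1)) := by
  rw [coeff_gradedTrace]
  refine Finset.sum_congr rfl fun m hm => ?_
  rw [LinearMap.comp_apply]
  conv_lhs =>
    rw [eq_sum_monomial_of_isHomogeneous (hφ _ (isHomogeneous_monomial_one hm)), map_sum]
  simp only [map_smul, coeff_sum, coeff_smul, smul_eq_mul]

theorem gradedTrace_comp_of_shift {φ ψ : MvPolynomial B R →ₗ[R] MvPolynomial B R} {N : ℕ}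
    (hφ : ∀ d f, f.IsHomogeneous d → (φ f).IsHomogeneous (d + N))
    (hψ : ∀ d f, f.IsHomogeneous (d + N) → (ψ f).IsHomogeneous d)
    (hψ₀ : ∀ d < N, ∀ f, f.IsHomogeneous d → ψ f = 0) :
    gradedTrace (φ ∘ₗ ψ) = PowerSeries.X ^ N * gradedTrace (ψ ∘ₗ φ) := by
  ext d
  rw [PowerSeries.coeff_X_pow_mul']
  split_ifs with h
  · obtain ⟨d, rfl⟩ := Nat.exists_eq_add_of_le' h
    rw [Nat.add_sub_cancel, coeff_gradedTrace_comp (hψ d), coeff_gradedTrace_comp (hφ d),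
      Finset.sum_comm]
    simp only [mul_comm]
  · rw [coeff_gradedTrace]
    refine Finset.sum_eq_zero fun m hm => ?_
    rw [LinearMap.comp_apply, hψ₀ d (not_le.1 h) _ (isHomogeneous_monomial_one hm), map_zero,
      coeff_zero]

theorem gradedTrace_comp_comm {φ ψ : MvPolynomial B R →ₗ[R] MvPolynomial B R}
    (hφ : ∀ d f, f.IsHomogeneous d → (φ f).IsHomogeneous d)
    (hψ : ∀ d f, f.IsHomogeneous d → (ψ f).IsHomogeneous d) :
    gradedTrace (φ ∘ₗ ψ) = gradedTrace (ψ ∘ₗ φ) := by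
  rw [gradedTrace_comp_of_shift (N := 0) hφ hψ (fun _ h => absurd h (Nat.not_lt_zero _)), pow_zero,
    one_mul]

theorem gradedTrace_comp_of_dvd {K : Type*} [Field K] {D : MvPolynomial B K} {N : ℕ}
    (hD : D.IsHomogeneous N) (hD₀ : D ≠ 0) {φ ψ γ : MvPolynomial B K →ₗ[K] MvPolynomial B K}
    (hφ : ∀ d f, f.IsHomogeneous d → (φ f).IsHomogeneous d)
    (hγ : ∀ d f, f.IsHomogeneous d → (γ f).IsHomogeneous d)
    (hdvd : ∀ f, D ∣ φ f) (hφD : ∀ f, φ (D * f) = D * ψ f) (hγD : ∀ f, γ (D * f) = D * γ f) :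
    gradedTrace (φ ∘ₗ γ) = PowerSeries.X ^ N * gradedTrace (ψ ∘ₗ γ) := by
  obtain ⟨divD, hdivD⟩ := LinearMap.exists_leftInverse_of_injective (LinearMap.mulLeft K D)
    (LinearMap.ker_eq_bot.2 (mul_right_injective₀ hD₀))
  have div_mul (f : MvPolynomial B K) : divD (D * f) = f := LinearMap.congr_fun hdivD f
  have mul_div (f : MvPolynomial B K) : D * divD (φ f) = φ f := by
    obtain ⟨g, hg⟩ := hdvd f
    rw [hg, div_mul]
  have hup : γ ∘ₗ φ = (γ ∘ₗ LinearMap.mulLeft K D) ∘ₗ (divD ∘ₗ φ) :=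
    LinearMap.ext fun f => congrArg γ (mul_div f).symm
  have hdown : (divD ∘ₗ φ) ∘ₗ (γ ∘ₗ LinearMap.mulLeft K D) = ψ ∘ₗ γ := LinearMap.ext fun f => by
    change divD (φ (γ (D * f))) = ψ (γ f)
    rw [hγD, hφD, div_mul]
  rw [gradedTrace_comp_comm hφ hγ, hup, ← hdown]
  refine gradedTrace_comp_of_shift (fun d f hf => hγ _ _ ?_) (fun d f hf => ?_)
    fun d hd f hf => ?_
  · rw [add_comm]
    exact hD.mul hf
  · exact isHomogeneous_of_mul_left hD hD₀ ((mul_div f).symm ▸ hφ _ f hf)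
  · exact eq_zero_of_mul_isHomogeneous_of_lt hD hD₀ ((mul_div f).symm ▸ hφ d f hf) hd

end GradedTrace

/-! ### Molien series -/

/-- The linear form `∑_i v_i X_i`. -/
def linForm : (B →₀ R) →ₗ[R] MvPolynomial B R :=
  Finsupp.linearCombination R X

theorem linForm_single (i : B) : linForm (Finsupp.single i (1 : R)) = X i := by
  rw [linForm, Finsupp.linearCombination_single, one_smul]

theorem linForm_injective : Function.Injective (linForm (B := B) (R := R)) :=
  linearIndependent_X B R

theorem isHomogeneous_linForm (v : B →₀ R) : (linForm v).IsHomogeneous 1 :=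
  IsHomogeneous.sum _ _ _ fun i _ => by
    simpa [smul_eq_C_mul] using (isHomogeneous_X R i).C_mul (v i)

theorem aeval_linForm (A : Module.End R (B →₀ R)) (v : B →₀ R) :
    aeval (fun i => linForm (A (Finsupp.single i 1))) (linForm v) = linForm (A v) := by
  suffices (aeval (fun i => linForm (A (Finsupp.single i 1)))).toLinearMap ∘ₗ linForm
      = linForm ∘ₗ A from LinearMap.congr_fun this v
  ext i : 2
  simp [linForm_single]

/-- The action of an endomorphism of a free module on its symmetric algebra, realised as the
polynomial ring on the chosen basis. -/
def symMap : Module.End R (B →₀ R) →* (MvPolynomial B R →ₐ[R] MvPolynomial B R) where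
  toFun A := aeval fun i => linForm (A (Finsupp.single i 1))
  map_one' := by
    ext1 i
    rw [aeval_X, Module.End.one_apply, linForm_single, AlgHom.one_apply]
  map_mul' A A' := by
    ext1 i
    rw [aeval_X, AlgHom.mul_apply, aeval_X, aeval_linForm, Module.End.mul_apply]

theorem symMap_X (A : Module.End R (B →₀ R)) (i : B) :
    symMap A (X i) = linForm (A (Finsupp.single i 1)) :=
  aeval_X _ i

theorem symMap_linForm (A : Module.End R (B →₀ R)) (v : B →₀ R) :
    symMap A (linForm v) = linForm (A v) :=
  aeval_linForm A v

theorem toLinearMap_symMap_mul (A A' : Module.End R (B →₀ R)) :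
    (symMap (A * A')).toLinearMap = (symMap A).toLinearMap ∘ₗ (symMap A').toLinearMap := by
  rw [map_mul]
  rfl

theorem isHomogeneous_symMap (A : Module.End R (B →₀ R)) {d : ℕ} {f : MvPolynomial B R}
    (hf : f.IsHomogeneous d) : (symMap A f).IsHomogeneous d := by
  have h := hf.aeval _ fun i => isHomogeneous_linForm (A (Finsupp.single i 1))
  rwa [one_mul] at h

theorem symMap_monomial_of_diagonal {A : Module.End R (B →₀ R)} {c : B → R}
    (hA : ∀ i, A (Finsupp.single i 1) = c i • Finsupp.single i 1) (m : B →₀ ℕ) :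
    symMap A (monomial m 1) = (m.prod fun i n => c i ^ n) • monomial m 1 := by
  rw [monomial_eq, C_1, one_mul, map_finsuppProd, smul_eq_C_mul, map_finsuppProd,
    ← Finsupp.prod_mul]
  refine Finsupp.prod_congr fun i _ => ?_
  rw [map_pow, symMap_X, hA, map_smul, linForm_single, smul_eq_C_mul, mul_pow, map_pow]

section Fintype

variable [Fintype B]

/-- The graded trace of an endomorphism on the symmetric algebra. Over a field it equals
`1 / det(1 - q A)`. -/
def molienSeries (A : Module.End R (B →₀ R)) : PowerSeries R :=
  gradedTrace (symMap A).toLinearMap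

theorem molienSeries_mul_comm (A A' : Module.End R (B →₀ R)) :
    molienSeries (A * A') = molienSeries (A' * A) := by
  rw [molienSeries, molienSeries, toLinearMap_symMap_mul, toLinearMap_symMap_mul]
  exact gradedTrace_comp_comm (fun _ _ => isHomogeneous_symMap A) fun _ _ => isHomogeneous_symMap A'

theorem molienSeries_smul (c : R) (A : Module.End R (B →₀ R)) :
    molienSeries (c • A) = PowerSeries.rescale c (molienSeries A) := by
  have hscalar (m : B →₀ ℕ) :
      symMap (c • 1 : Module.End R (B →₀ R)) (monomial m 1) = c ^ m.degree • monomial m 1 := by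
    rw [symMap_monomial_of_diagonal (c := fun _ => c) fun _ => rfl, Finsupp.prod,
      Finset.prod_pow_eq_pow_sum, Finsupp.degree_apply]
  have hA : c • A = A * c • 1 := by rw [mul_smul_comm, mul_one]
  ext d
  rw [PowerSeries.coeff_rescale, molienSeries, molienSeries, coeff_gradedTrace, coeff_gradedTrace,
    Finset.mul_sum]
  refine Finset.sum_congr rfl fun m hm => ?_
  rw [hA, map_mul, AlgHom.toLinearMap_apply, AlgHom.mul_apply, hscalar, map_smul, coeff_smul,
    mem_finsuppAntidiag_univ.1 hm, smul_eq_mul, AlgHom.toLinearMap_apply]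

theorem molienSeries_mul_prod_of_diagonal {A : Module.End R (B →₀ R)} {c : B → R}
    (hA : ∀ i, A (Finsupp.single i 1) = c i • Finsupp.single i 1) :
    molienSeries A * ∏ i, (1 - PowerSeries.C (c i) * PowerSeries.X) = 1 := by
  have hprod : molienSeries A = ∏ i, PowerSeries.rescale (c i) (PowerSeries.mk 1) := by
    ext d
    rw [PowerSeries.coeff_prod, molienSeries, coeff_gradedTrace]
    refine Finset.sum_congr rfl fun m _ => ?_
    rw [AlgHom.toLinearMap_apply, symMap_monomial_of_diagonal hA, coeff_smul, coeff_monomial,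
      if_pos rfl, smul_eq_mul, mul_one, Finsupp.prod_fintype _ _ fun i => pow_zero _]
    simp [PowerSeries.coeff_rescale]
  rw [hprod, ← Finset.prod_mul_distrib]
  refine Finset.prod_eq_one fun i _ => ?_
  have h := congrArg (PowerSeries.rescale (c i)) (PowerSeries.mk_one_mul_one_sub_eq_one R)
  rwa [map_mul, map_sub, map_one, PowerSeries.rescale_X] at h

theorem molienSeries_one_mul :
    molienSeries (1 : Module.End R (B →₀ R)) * (1 - PowerSeries.X) ^ Fintype.card B = 1 := by
  have h := molienSeries_mul_prod_of_diagonal (A := (1 : Module.End R (B →₀ R))) (c := fun _ => 1)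
    fun i => (one_smul _ _).symm
  rwa [map_one, one_mul, Finset.prod_const, Finset.card_univ] at h

end Fintype

end

section

variable {B K V : Type*} [Field K] [NeZero (2 : K)] [AddCommGroup V] [Module K V]

theorem exists_basis_of_involution {A : Module.End K V} (hA : A * A = 1)
    (b₀ : Module.Basis B K V) :
    ∃ b : Module.Basis B K V, ∀ i, A (b i) = b i ∨ A (b i) = -b i := by
  have hspan : ⊤ ≤ Submodule.span K {v | A v = v ∨ A v = -v} := fun v _ => by
    have hAA : A (A v) = v := LinearMap.congr_fun hA v
    have hv : v = (2⁻¹ : K) • (v + A v) + (2⁻¹ : K) • (v - A v) := by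
      rw [← smul_add, add_add_sub_cancel, ← two_smul K, smul_smul, inv_mul_cancel₀ two_ne_zero,
        one_smul]
    rw [hv]
    refine add_mem (Submodule.smul_mem _ _ (Submodule.subset_span (Or.inl ?_)))
      (Submodule.smul_mem _ _ (Submodule.subset_span (Or.inr ?_)))
    · rw [map_add, hAA, add_comm]
    · rw [map_sub, hAA, neg_sub]
  let b := Module.Basis.ofSpan hspan
  let e := b.indexEquiv b₀
  refine ⟨b.reindex e, fun i => ?_⟩
  rw [b.reindex_apply]
  exact Module.Basis.ofSpan_subset hspan (Set.mem_range_self _)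

theorem molienSeries_of_involution [Fintype B] {A : Module.End K (B →₀ K)} (hA : A * A = 1) :
    ∃ a b : ℕ, a + b = Fintype.card B ∧
      molienSeries A * ((1 - PowerSeries.X) ^ a * (1 + PowerSeries.X) ^ b) = 1 := by
  obtain ⟨b, hb⟩ := exists_basis_of_involution hA Finsupp.basisSingleOne
  let s : Finset B := {i | A (b i) = b i}
  have hbs (i : B) : A (b i) = (if i ∈ s then 1 else -1 : K) • b i := by
    split_ifs with hi
    · rw [one_smul, (Finset.mem_filter_univ i).1 hi]
    · rw [neg_one_smul]
      exact (hb i).resolve_left fun h => hi ((Finset.mem_filter_univ i).2 h)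
  refine ⟨s.card, sᶜ.card, Finset.card_add_card_compl s, ?_⟩
  let A' : Module.End K (B →₀ K) := b.repr.toLinearMap ∘ₗ A ∘ₗ b.repr.symm.toLinearMap
  have hconj : molienSeries A = molienSeries A' := by
    let P : Module.End K (B →₀ K) := b.repr.symm.toLinearMap
    let Q : Module.End K (B →₀ K) := b.repr.toLinearMap
    have hPQ : P * Q = 1 := LinearMap.ext b.repr.symm_apply_apply
    calc molienSeries A = molienSeries (A * P * Q) := by rw [mul_assoc, hPQ, mul_one]
      _ = molienSeries A' := molienSeries_mul_comm _ _
  have hdiag := molienSeries_mul_prod_of_diagonal (A := A')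
    (c := fun i => if i ∈ s then 1 else -1) fun i => by
      simp only [A', LinearMap.comp_apply, LinearEquiv.coe_coe, b.repr_symm_single_one, hbs,
        map_smul, b.repr_self]
  rw [← Finset.prod_mul_prod_compl s, Finset.prod_congr rfl fun i hi => by
    rw [if_pos hi, map_one, one_mul], Finset.prod_congr (s₁ := sᶜ) rfl fun i hi => by
    rw [if_neg (Finset.mem_compl.1 hi), map_neg, map_one, neg_one_mul, sub_neg_eq_add],
    Finset.prod_const, Finset.prod_const] at hdiag
  rw [hconj, hdiag]

end

section

open MvPolynomial

variable {B W : Type*} [Group W] {M : CoxeterMatrix B} (cs : CoxeterSystem M W) {J : Set B}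

/-! ### The action on the symmetric algebra -/

/-- The action of `W` on the symmetric algebra of the geometric representation. -/
def symRep : W →* (MvPolynomial B ℝ →ₐ[ℝ] MvPolynomial B ℝ) :=
  symMap.comp (LinearEquiv.automorphismGroup.toLinearMapMonoidHom.comp (geomRep cs))

theorem symRep_apply (w : W) : symRep cs w = symMap (geomRep cs w).toLinearMap := rfl

theorem symRep_linForm (w : W) (v : B →₀ ℝ) :
    symRep cs w (linForm v) = linForm (geomRep cs w v) :=
  symMap_linForm _ v

theorem symRep_mul_apply (x y : W) (f : MvPolynomial B ℝ) :
    symRep cs (x * y) f = symRep cs x (symRep cs y f) := by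
  rw [map_mul, AlgHom.mul_apply]

theorem X_dvd_sub_symRep_simple (j : B) (f : MvPolynomial B ℝ) :
    X j ∣ f - symRep cs (cs.simple j) f := by
  induction f using MvPolynomial.induction_on with
  | C a =>
    rw [← algebraMap_eq, AlgHom.commutes, sub_self]
    exact dvd_zero _
  | add p q hp hq =>
    rw [map_add, add_sub_add_comm]
    exact dvd_add hp hq
  | mul_X p i hp =>
    have hX : X i - symRep cs (cs.simple j) (X i)
        = C (rootForm M (simpleRoot j) (simpleRoot i)) * X j := by
      rw [← linForm_single, symRep_linForm, ← map_sub]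
      change linForm (simpleRoot i - geomRep cs (cs.simple j) (simpleRoot i)) = _
      rw [geomRep_simple_apply, sub_sub_cancel, map_smul, simpleRoot, linForm_single, smul_eq_C_mul]
    have hsplit : p * X i - symRep cs (cs.simple j) (p * X i)
        = (p - symRep cs (cs.simple j) p) * X i
          + symRep cs (cs.simple j) p * (X i - symRep cs (cs.simple j) (X i)) := by
      rw [map_mul]
      ring
    rw [hsplit, hX]
    exact dvd_add (hp.mul_right _) ((dvd_mul_left _ _).mul_left _)

variable {cs} in
theorem prime_linForm {β : B →₀ ℝ} (hβ : β ∈ roots cs J) : Prime (linForm β) := by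
  obtain ⟨w, -, j, -, rfl⟩ := hβ
  rw [← symRep_linForm, simpleRoot, linForm_single]
  exact (MulEquiv.prime_iff
    (AlgEquiv.algHomUnitsEquiv _ _ ((symRep cs).toHomUnits w)).toMulEquiv).2 X_prime

variable {cs} in
theorem linForm_dvd_of_antiinvariant {f : MvPolynomial B ℝ}
    (hf : ∀ w ∈ parabolic cs J, symRep cs w f = (-1 : ℝ) ^ cs.length w • f) {β : B →₀ ℝ}
    (hβ : β ∈ roots cs J) : linForm β ∣ f := by
  have hunit {c : ℝ} (hc : c ≠ 0) : IsUnit (C c : MvPolynomial B ℝ) :=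
    (isUnit_iff_ne_zero.2 hc).map C
  obtain ⟨w, hw, j, hj, rfl⟩ := hβ
  have hX : X j ∣ f := by
    have h := X_dvd_sub_symRep_simple cs j f
    rw [hf _ (simple_mem_parabolic cs hj), cs.length_simple, pow_one, neg_one_smul, sub_neg_eq_add,
      ← two_smul ℝ, smul_eq_C_mul] at h
    exact (hunit two_ne_zero).dvd_mul_left.1 h
  have h := map_dvd (symRep cs w) hX
  rw [← linForm_single, symRep_linForm, hf w hw, smul_eq_C_mul] at h
  exact (hunit (pow_ne_zero _ (neg_ne_zero.2 one_ne_zero))).dvd_mul_left.1 h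

/-- The Molien series of the element `w σ` of the extended group `W ⋊ ⟨σ⟩`. -/
def twistedMolien [Fintype B] (σ : DiagramAut cs) (w : W) : PowerSeries ℝ :=
  molienSeries ((geomRep cs w).toLinearMap * σ.onRoots.toLinearMap)

theorem twistedMolien_eq_gradedTrace [Fintype B] (σ : DiagramAut cs) (w : W) :
    twistedMolien cs σ w
      = gradedTrace ((symRep cs w).toLinearMap ∘ₗ (symMap σ.onRoots.toLinearMap).toLinearMap) := by
  rw [twistedMolien, molienSeries, toLinearMap_symMap_mul, symRep_apply]

theorem twistedMolien_conj [Fintype B] (σ : DiagramAut cs) (x w : W) :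
    twistedMolien cs σ (x * w * (σ.toMulEquiv x)⁻¹) = twistedMolien cs σ w := by
  have hcomm : (geomRep cs (σ.toMulEquiv x)⁻¹).toLinearMap * σ.onRoots.toLinearMap
      = σ.onRoots.toLinearMap * (geomRep cs x⁻¹).toLinearMap := by
    rw [← map_inv]
    exact LinearMap.ext fun v => σ.geomRep_onRoots _ v
  have hmul (u v : W) : (geomRep cs (u * v)).toLinearMap
      = (geomRep cs u).toLinearMap * (geomRep cs v).toLinearMap := by
    rw [map_mul]
    rfl
  rw [twistedMolien, hmul, mul_assoc, hcomm, ← mul_assoc, molienSeries_mul_comm, ← mul_assoc,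
    ← hmul, inv_mul_cancel_left, twistedMolien]

section Finite

variable [Finite W]

theorem isRelPrime_linForm {β γ : B →₀ ℝ} (hβ : β ∈ posRoots cs J) (hγ : γ ∈ posRoots cs J)
    (hne : β ≠ γ) : IsRelPrime (linForm β) (linForm γ) := by
  rw [mem_posRoots] at hβ hγ
  have hβ' := (prime_linForm hβ.1).irreducible
  rw [hβ'.isRelPrime_iff_not_dvd,
    hβ'.dvd_irreducible_iff_associated (prime_linForm hγ.1).irreducible]
  rintro ⟨u, hu⟩
  obtain ⟨c, -, hc⟩ := isUnit_iff_eq_C_of_isReduced.1 u.isUnit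
  rw [hc, mul_comm, ← smul_eq_C_mul, ← map_smul] at hu
  have hsmul : γ = c • β := (linForm_injective hu).symm
  have hc₀ : 0 ≤ c := by
    by_contra! hneg
    refine ne_zero_of_mem_roots hγ.1 (le_antisymm ?_ hγ.2)
    rw [hsmul]
    exact smul_nonpos_of_nonpos_of_nonneg hneg.le hβ.2
  exact hne (eq_of_eq_smul_of_mem_roots hβ.1 hγ.1 hc₀ hsmul).symm

/-- The product of the positive roots of `W_J`, as a polynomial of degree their number. -/
def rootPoly (J : Set B) : MvPolynomial B ℝ :=
  ∏ β ∈ posRoots cs J, linForm β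

theorem isHomogeneous_rootPoly : (rootPoly cs J).IsHomogeneous (posRoots cs J).card := by
  have h := IsHomogeneous.prod (posRoots cs J) linForm (fun _ => 1)
    fun β _ => isHomogeneous_linForm β
  rwa [← Finset.card_eq_sum_ones] at h

theorem rootPoly_ne_zero : rootPoly cs J ≠ 0 :=
  Finset.prod_ne_zero_iff.2 fun _ hβ => (prime_linForm ((mem_posRoots cs).1 hβ).1).ne_zero

theorem rootPoly_dvd_of_antiinvariant {f : MvPolynomial B ℝ}
    (hf : ∀ w ∈ parabolic cs J, symRep cs w f = (-1 : ℝ) ^ cs.length w • f) : rootPoly cs J ∣ f :=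
  Finset.prod_dvd_of_isRelPrime (fun _ hβ _ hγ => isRelPrime_linForm cs hβ hγ)
    fun _ hβ => linForm_dvd_of_antiinvariant hf ((mem_posRoots cs).1 hβ).1

theorem symRep_simple_rootPoly {j : B} (hj : j ∈ J) :
    symRep cs (cs.simple j) (rootPoly cs J) = -rootPoly cs J := by
  have hmaps (β : B →₀ ℝ) (hβ : β ∈ (posRoots cs J).erase (simpleRoot j)) :
      geomRep cs (cs.simple j) β ∈ (posRoots cs J).erase (simpleRoot j) := by
    rw [Finset.mem_erase] at hβ ⊢
    refine ⟨fun h => ?_, geomRep_simple_mem_posRoots cs hβ.2 hj hβ.1⟩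
    have hβneg : β = -simpleRoot j := by
      rw [← geomRep_simple_simpleRoot_self cs, ← h, geomRep_simple_simple_apply]
    have hpos := ((mem_posRoots cs).1 hβ.2).2
    rw [hβneg, Left.nonneg_neg_iff] at hpos
    exact simpleRoot_ne_zero j (le_antisymm hpos (simpleRoot_nonneg j))
  rw [rootPoly, ← Finset.mul_prod_erase _ _ (simpleRoot_mem_posRoots cs hj), map_mul, map_prod,
    symRep_linForm, geomRep_simple_simpleRoot_self, map_neg, neg_mul]
  congr 2
  exact Finset.prod_nbij' (geomRep cs (cs.simple j)) (geomRep cs (cs.simple j)) hmaps hmaps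
    (fun β _ => geomRep_simple_simple_apply cs j β) (fun β _ => geomRep_simple_simple_apply cs j β)
    fun β _ => symRep_linForm cs _ β

theorem symRep_rootPoly {w : W} (hw : w ∈ parabolic cs J) :
    symRep cs w (rootPoly cs J) = (-1 : ℝ) ^ cs.length w • rootPoly cs J := by
  induction hw using parabolic_induction with
  | one => simp
  | mul_simple w hw j hj _ ih =>
    rw [symRep_mul_apply, symRep_simple_rootPoly cs hj, map_neg, ih, neg_one_pow_length_mul,
      cs.length_simple, pow_one, mul_neg_one, neg_smul]

theorem symMap_onRoots_rootPoly (σ : DiagramAut cs) (T : Finset σ.Orbit) :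
    symMap σ.onRoots.toLinearMap (rootPoly cs (σ.union T)) = rootPoly cs (σ.union T) := by
  have hmap : (posRoots cs (σ.union T)).map σ.onRoots.toEquiv.toEmbedding
      = posRoots cs (σ.union T) := by
    refine Finset.eq_of_subset_of_card_le (fun γ hγ => ?_) (Finset.card_map _).ge
    obtain ⟨β, hβ, rfl⟩ := Finset.mem_map.1 hγ
    obtain ⟨⟨w, hw, j, hj, rfl⟩, hpos⟩ := (mem_posRoots cs).1 hβ
    refine (mem_posRoots cs).2 ⟨⟨σ.toMulEquiv w, σ.map_mem_parabolic_union.2 hw, σ.perm j,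
      σ.perm_mem_union.2 hj, ?_⟩, σ.onRoots_nonneg_iff.2 hpos⟩
    rw [← σ.onRoots_simpleRoot, σ.geomRep_onRoots]
    rfl
  rw [rootPoly, map_prod]
  conv_rhs => rw [← hmap, Finset.prod_map]
  exact Finset.prod_congr rfl fun β _ => symMap_linForm _ β

end Finite

end

section

open MvPolynomial

variable {B W : Type*} [Group W] [Fintype W] {M : CoxeterMatrix B} (cs : CoxeterSystem M W)
  {J : Set B}

/-! ### Averages over parabolic subgroups -/

section Average

variable {E F : Type*} [AddCommGroup E] [Module ℝ E] [AddCommGroup F] [Module ℝ F]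

/-- The mean value of a function over a parabolic subgroup. -/
def average (J : Set B) (χ : W → E) : E :=
  (Fintype.card (parabolic cs J) : ℝ)⁻¹ • ∑ w : parabolic cs J, χ w

theorem map_average (φ : E →ₗ[ℝ] F) (χ : W → E) :
    φ (average cs J χ) = average cs J fun w => φ (χ w) := by
  rw [average, average, map_smul, map_sum]

theorem average_congr {χ χ' : W → E} (h : ∀ w ∈ parabolic cs J, χ w = χ' w) :
    average cs J χ = average cs J χ' := by
  rw [average, average, Fintype.sum_congr _ _ fun w : parabolic cs J => h w w.2]

theorem average_mul_left {u : W} (hu : u ∈ parabolic cs J) (χ : W → E) :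
    average cs J (fun w => χ (u * w)) = average cs J χ := by
  rw [average, average]
  congr 1
  exact Equiv.sum_comp (Equiv.mulLeft (⟨u, hu⟩ : parabolic cs J)) fun w => χ w

theorem average_const (J : Set B) (e : E) : average cs J (fun _ => e) = e := by
  rw [average, Finset.sum_const, Finset.card_univ, ← Nat.cast_smul_eq_nsmul ℝ, smul_smul,
    inv_mul_cancel₀ (Nat.cast_ne_zero.2 Fintype.card_ne_zero), one_smul]

end Average

/-! ### Molien's functional equation -/

/-- The projection of the symmetric algebra onto the `W_J`-invariants. -/
def symmetrizer (J : Set B) : MvPolynomial B ℝ →ₗ[ℝ] MvPolynomial B ℝ :=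
  average cs J fun w => (symRep cs w).toLinearMap

/-- The projection of the symmetric algebra onto the `W_J`-antiinvariants. -/
def antisymmetrizer (J : Set B) : MvPolynomial B ℝ →ₗ[ℝ] MvPolynomial B ℝ :=
  average cs J fun w => (-1 : ℝ) ^ cs.length w • (symRep cs w).toLinearMap

theorem symmetrizer_apply (f : MvPolynomial B ℝ) :
    symmetrizer cs J f = average cs J fun w => symRep cs w f := by
  simp only [symmetrizer, average, LinearMap.smul_apply, LinearMap.sum_apply,
    AlgHom.toLinearMap_apply]

theorem antisymmetrizer_apply (f : MvPolynomial B ℝ) :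
    antisymmetrizer cs J f = average cs J fun w => (-1 : ℝ) ^ cs.length w • symRep cs w f := by
  simp only [antisymmetrizer, average, LinearMap.smul_apply, LinearMap.sum_apply,
    AlgHom.toLinearMap_apply]

theorem symRep_antisymmetrizer {u : W} (hu : u ∈ parabolic cs J) (f : MvPolynomial B ℝ) :
    symRep cs u (antisymmetrizer cs J f) = (-1 : ℝ) ^ cs.length u • antisymmetrizer cs J f := by
  rw [antisymmetrizer_apply]
  conv_rhs => rw [← average_mul_left cs hu, ← LinearMap.lsmul_apply, map_average]
  rw [← AlgHom.toLinearMap_apply, map_average]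
  refine average_congr cs fun w _ => ?_
  rw [AlgHom.toLinearMap_apply, map_smul, LinearMap.lsmul_apply, smul_smul, neg_one_pow_length_mul,
    ← mul_assoc, ← mul_pow, neg_one_mul, neg_neg, one_pow, one_mul, symRep_mul_apply]

theorem antisymmetrizer_rootPoly_mul (f : MvPolynomial B ℝ) :
    antisymmetrizer cs J (rootPoly cs J * f) = rootPoly cs J * symmetrizer cs J f := by
  change _ = LinearMap.mulLeft ℝ (rootPoly cs J) _
  rw [antisymmetrizer_apply, symmetrizer_apply, map_average]
  refine average_congr cs fun w hw => ?_
  rw [map_mul, symRep_rootPoly cs hw, smul_mul_assoc, smul_smul, ← mul_pow, neg_one_mul, neg_neg,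
    one_pow, one_smul, LinearMap.mulLeft_apply]

theorem isHomogeneous_antisymmetrizer {d : ℕ} {f : MvPolynomial B ℝ} (hf : f.IsHomogeneous d) :
    (antisymmetrizer cs J f).IsHomogeneous d := by
  rw [antisymmetrizer_apply]
  exact Submodule.smul_mem (homogeneousSubmodule B ℝ d) _ (Submodule.sum_mem _ fun w _ =>
    Submodule.smul_mem _ _ (isHomogeneous_symMap _ hf))

/-- Multiplication by the product of the positive roots identifies the invariants with the
antiinvariants, and shifts degrees by the number of positive roots. -/
theorem average_neg_one_pow_smul_twistedMolien [Fintype B] (σ : DiagramAut cs)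
    (T : Finset σ.Orbit) :
    average cs (σ.union T) (fun w => (-1 : ℝ) ^ cs.length w • twistedMolien cs σ w)
      = PowerSeries.X ^ (posRoots cs (σ.union T)).card
        * average cs (σ.union T) (twistedMolien cs σ) := by
  let γ := (symMap σ.onRoots.toLinearMap).toLinearMap
  let traceComp := gradedTrace ∘ₗ LinearMap.lcomp ℝ (MvPolynomial B ℝ) γ
  have hanti : traceComp (antisymmetrizer cs (σ.union T))
      = average cs (σ.union T) fun w => (-1 : ℝ) ^ cs.length w • twistedMolien cs σ w := by
    simp only [antisymmetrizer, map_average, map_smul, twistedMolien_eq_gradedTrace]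
    rfl
  have hsym : traceComp (symmetrizer cs (σ.union T))
      = average cs (σ.union T) (twistedMolien cs σ) := by
    rw [symmetrizer, map_average, funext (twistedMolien_eq_gradedTrace cs σ)]
    rfl
  rw [← hanti, ← hsym]
  change gradedTrace (antisymmetrizer cs (σ.union T) ∘ₗ γ)
    = _ * gradedTrace (symmetrizer cs (σ.union T) ∘ₗ γ)
  refine gradedTrace_comp_of_dvd (isHomogeneous_rootPoly cs) (rootPoly_ne_zero cs)
    (fun d f => isHomogeneous_antisymmetrizer cs) (fun d f => isHomogeneous_symMap _)
    (fun f => rootPoly_dvd_of_antiinvariant cs fun w hw => symRep_antisymmetrizer cs hw f)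
    (antisymmetrizer_rootPoly_mul cs) fun f => ?_
  rw [AlgHom.toLinearMap_apply, map_mul, symMap_onRoots_rootPoly, AlgHom.toLinearMap_apply]

end

section

variable {B W : Type*} [Group W] {M : CoxeterMatrix B} (cs : CoxeterSystem M W) {I J K : Set B}

/-! ### Minimal coset representatives -/

section MinReps

variable [Fintype W]

/-- The representatives of minimal length of the cosets in `W_I / W_J`. -/
def minReps (I J : Set B) : Finset W :=
  {y | y ∈ parabolic cs I ∧ ∀ j ∈ J, ¬ cs.IsRightDescent y j}

theorem mem_minReps {y : W} :
    y ∈ minReps cs I J ↔ y ∈ parabolic cs I ∧ ∀ j ∈ J, ¬ cs.IsRightDescent y j := by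
  rw [minReps, Finset.mem_filter_univ]

theorem sum_parabolic_eq_sum_minReps {E : Type*} [AddCommMonoid E] (hJI : J ⊆ I) (f : W → E) :
    ∑ w : parabolic cs I, f w = ∑ y ∈ minReps cs I J, ∑ u : parabolic cs J, f (y * u) := by
  have hle := parabolic_mono cs hJI
  rw [Finset.sum_sigma', eq_comm]
  refine Finset.sum_bij (fun p hp => ⟨p.1 * p.2, mul_mem ((mem_minReps cs).1
    (Finset.mem_sigma.1 hp).1).1 (hle p.2.2)⟩) (fun _ _ => Finset.mem_univ _) ?_ ?_ fun _ _ => rfl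
  · rintro ⟨y, u⟩ hy ⟨y', u'⟩ hy' h
    simp only [Finset.mem_sigma, mem_minReps, Finset.mem_univ, and_true] at hy hy'
    simp only [Subtype.mk.injEq] at h
    have hy_eq : y' * (u' * u⁻¹ : W) = y := by
      rw [← mul_assoc, ← h]
      exact mul_inv_cancel_right _ _
    have hu : (u' * u⁻¹ : W) = 1 := eq_one_of_mul_no_descents cs hy'.2
      (mul_mem u'.2 (inv_mem u.2)) fun j hj => by rw [hy_eq]; exact hy.2 j hj
    rw [hu, mul_one] at hy_eq
    subst hy_eq
    rw [Subtype.ext (mul_left_cancel h)]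
  · rintro ⟨w, hw⟩ -
    obtain ⟨z, hz, hdesc⟩ := exists_mul_no_descents cs J w
    refine ⟨⟨w * z, ⟨z⁻¹, inv_mem hz⟩⟩, ?_, Subtype.ext (mul_inv_cancel_right w z)⟩
    simpa only [Finset.mem_sigma, mem_minReps, Finset.mem_univ, and_true]
      using ⟨mul_mem hw (hle hz), hdesc⟩

theorem card_minReps_mul_card (J : Set B) :
    (minReps cs Set.univ J).card * Fintype.card (parabolic cs J) = Fintype.card W := by
  have h := sum_parabolic_eq_sum_minReps cs (Set.subset_univ J) fun _ => 1
  simp only [Finset.sum_const, Finset.card_univ, smul_eq_mul, mul_one] at h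
  rw [← h, parabolic_univ, ← Nat.card_eq_fintype_card, ← Nat.card_eq_fintype_card,
    Subgroup.card_top]

end MinReps

/-! ### A triangular basis adapted to right-invariant functions -/

/-- The functions on `W` that are constant on the left cosets of `W_K`. -/
def rightInvariants (K : Set B) : Submodule ℝ (W → ℝ) where
  carrier := {f | ∀ x, ∀ u ∈ parabolic cs K, f (x * u) = f x}
  add_mem' hf hg x u hu := congrArg₂ (· + ·) (hf x u hu) (hg x u hu)
  zero_mem' _ _ _ := rfl
  smul_mem' c _ hf x u hu := congrArg (c * ·) (hf x u hu)

/-- The right descents of `w` that lie in `I`. -/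
def descents (I : Set B) (w : W) : Set B :=
  {i ∈ I | cs.IsRightDescent w i}

/-- The indicator function of the coset `y W_D`, where `D` consists of the descents of `y` in `I`;
thus `y` is the longest element of this coset. -/
def descentIndicator (I : Set B) (y : W) : W → ℝ :=
  fun x => if y⁻¹ * x ∈ parabolic cs (descents cs I y) then 1 else 0

theorem descentIndicator_mem_rightInvariants {y : W} (hK : K ⊆ descents cs I y) :
    descentIndicator cs I y ∈ rightInvariants cs K := by
  intro x u hu
  rw [descentIndicator, descentIndicator, ← mul_assoc,
    Subgroup.mul_mem_cancel_right _ (parabolic_mono cs hK hu)]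

theorem descentIndicator_self (y : W) : descentIndicator cs I y y = 1 := by
  rw [descentIndicator, inv_mul_cancel, if_pos (one_mem _)]

theorem descentIndicator_eq_zero {x y : W} (hlen : cs.length y ≤ cs.length x) (hne : x ≠ y) :
    descentIndicator cs I y x = 0 := by
  refine if_neg fun hx => hne ?_
  have h := length_mul_of_all_descents cs (fun j hj => hj.2) hx
  rw [mul_inv_cancel_left] at h
  exact (inv_mul_eq_one.1 (cs.length_eq_zero_iff.1 (by omega))).symm

theorem descentIndicator_of_descents_eq_empty {y : W} (hy : descents cs I y = ∅) :
    descentIndicator cs I y = Pi.single y 1 := by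
  funext x
  rw [descentIndicator, hy, parabolic_empty, Subgroup.mem_bot, inv_mul_eq_one, Pi.single_apply]
  exact if_congr eq_comm rfl rfl

theorem span_descentIndicator_le :
    Submodule.span ℝ (descentIndicator cs I '' {y | K ⊆ descents cs I y})
      ≤ rightInvariants cs K := by
  rw [Submodule.span_le]
  rintro _ ⟨y, hy, rfl⟩
  exact descentIndicator_mem_rightInvariants cs hy

theorem exists_mem_span_descentIndicator_apply_eq [Finite W] (hK : K ⊆ I) {f : W → ℝ}
    (hf : f ∈ rightInvariants cs K) {n : ℕ} (hzero : ∀ x, n < cs.length x → f x = 0) :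
    ∃ g ∈ Submodule.span ℝ (descentIndicator cs I '' {y | K ⊆ descents cs I y}),
      ∀ x, n ≤ cs.length x → g x = f x := by
  have := Fintype.ofFinite W
  have htop (y : W) (hy : cs.length y = n) (hfy : f y ≠ 0) : K ⊆ descents cs I y := by
    refine fun i hi => ⟨hK hi, by_contra fun hdesc => hfy ?_⟩
    rw [← hf y _ (simple_mem_parabolic cs hi)]
    exact hzero _ (by rw [cs.not_isRightDescent_iff.1 hdesc, hy]; exact Nat.lt_succ_self n)
  refine ⟨∑ y with cs.length y = n, f y • descentIndicator cs I y,
    Submodule.sum_mem _ fun y hy => ?_, fun x hx => ?_⟩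
  · by_cases hfy : f y = 0
    · rw [hfy, zero_smul]
      exact Submodule.zero_mem _
    · exact Submodule.smul_mem _ _
        (Submodule.subset_span ⟨y, htop y ((Finset.mem_filter_univ y).1 hy) hfy, rfl⟩)
  · refine (Finset.sum_apply _ _ _).trans ((Finset.sum_eq_single x ?_ ?_).trans ?_)
    · intro y hy hne
      rw [Pi.smul_apply, descentIndicator_eq_zero cs ((Finset.mem_filter_univ y).1 hy ▸ hx)
        hne.symm, smul_zero]
    · intro hx'
      rw [Finset.mem_filter_univ] at hx'
      rw [Pi.smul_apply, hzero x (by omega), zero_smul]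
    · rw [Pi.smul_apply, descentIndicator_self, smul_eq_mul, mul_one]

theorem mem_span_descentIndicator [Finite W] (hK : K ⊆ I) {f : W → ℝ}
    (hf : f ∈ rightInvariants cs K) :
    f ∈ Submodule.span ℝ (descentIndicator cs I '' {y | K ⊆ descents cs I y}) := by
  suffices h : ∀ n, ∀ f ∈ rightInvariants cs K, (∀ x, n ≤ cs.length x → f x = 0) →
      f ∈ Submodule.span ℝ (descentIndicator cs I '' {y | K ⊆ descents cs I y}) by
    obtain ⟨n, hn⟩ := (Set.finite_range cs.length).bddAbove
    exact h (n + 1) f hf fun x hx => absurd (hn ⟨x, rfl⟩) (by omega)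
  intro n
  induction n with
  | zero =>
    intro f _ hzero
    rw [funext fun x => hzero x (Nat.zero_le _)]
    exact Submodule.zero_mem _
  | succ n ih =>
    intro f hf hzero
    obtain ⟨g, hg, hgf⟩ := exists_mem_span_descentIndicator_apply_eq cs hK hf hzero
    rw [← sub_add_cancel f g]
    refine Submodule.add_mem _ (ih _ (Submodule.sub_mem _ hf
      (span_descentIndicator_le cs hg)) fun x hx => ?_) hg
    rw [Pi.sub_apply, hgf x hx, sub_self]

variable [Fintype W]

/-- The basis of the space of functions on `W` formed by the indicators `descentIndicator`. -/
def descentBasis (I : Set B) : Module.Basis W ℝ (W → ℝ) :=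
  basisOfTopLeSpanOfCardEqFinrank (descentIndicator cs I)
    (fun f _ => Submodule.span_mono (Set.image_subset_range _ _)
      (mem_span_descentIndicator cs (Set.empty_subset I) fun x u hu => by
        rw [parabolic_empty, Subgroup.mem_bot] at hu
        rw [hu, mul_one]))
    (Module.finrank_fintype_fun_eq_card ℝ).symm

theorem descentBasis_apply (y : W) : descentBasis cs I y = descentIndicator cs I y := by
  rw [descentBasis, coe_basisOfTopLeSpanOfCardEqFinrank]

theorem descentBasis_repr_eq_zero (hK : K ⊆ I) {f : W → ℝ} (hf : f ∈ rightInvariants cs K) {y : W}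
    (hy : ¬ K ⊆ descents cs I y) : (descentBasis cs I).repr f y = 0 := by
  have h := mem_span_descentIndicator cs hK hf
  rw [← funext (descentBasis_apply cs), Module.Basis.mem_span_image] at h
  exact Finsupp.notMem_support_iff.1 fun hmem => hy (h hmem)

end

section

variable {B W : Type*} [Group W] {M : CoxeterMatrix B} (cs : CoxeterSystem M W) {I K : Set B}

/-! ### The twisted Solomon formula -/

section Orbits

variable {cs} [Finite B] (σ : DiagramAut cs)

theorem sum_powerset_neg_one_pow_of_union_subset {R : Type*} [Ring R] {T₀ : Finset σ.Orbit}
    {X : Set B} (hX : ∀ i ∈ X, σ.perm i ∈ X) (hXT : X ⊆ σ.union T₀) :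
    ∑ T ∈ T₀.powerset, (if σ.union T ⊆ X then (-1 : R) ^ T.card else 0)
      = if X = ∅ then 1 else 0 := by
  let Y : Finset σ.Orbit := {ω ∈ T₀ | σ.union {ω} ⊆ X}
  have hfilter : {T ∈ T₀.powerset | σ.union T ⊆ X} = Y.powerset := by
    ext T
    simp only [Finset.mem_filter, Finset.mem_powerset]
    refine ⟨fun ⟨hT, hTX⟩ ω hω => Finset.mem_filter.2 ⟨hT hω,
      (σ.union_mono (Finset.singleton_subset_iff.2 hω)).trans hTX⟩, fun hT =>
      ⟨hT.trans (Finset.filter_subset _ _), fun i hi => ?_⟩⟩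
    exact (Finset.mem_filter.1 (hT hi)).2 (Finset.mem_singleton_self _)
  have hY : Y = ∅ ↔ X = ∅ := by
    rw [Finset.eq_empty_iff_forall_notMem, Set.eq_empty_iff_forall_notMem]
    refine ⟨fun h i hi => h _ (Finset.mem_filter.2 ⟨hXT hi, σ.union_singleton_subset hX hi⟩),
      fun h ω hω => ?_⟩
    obtain ⟨i, hi⟩ := σ.union_nonempty (Finset.singleton_nonempty ω)
    exact h i ((Finset.mem_filter.1 hω).2 hi)
  rw [← Finset.sum_filter, hfilter]
  have h := congrArg (Int.cast (R := R)) (Finset.sum_powerset_neg_one_pow_card (x := Y))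
  simpa only [hY, Int.cast_sum, Int.cast_pow, Int.cast_neg, Int.cast_one, Int.cast_ite,
    Int.cast_zero] using h

end Orbits

variable [Fintype W]

theorem descentBasis_repr_of_descents_eq_empty {y : W} (hy : descents cs I y = ∅) (f : W → ℝ) :
    (descentBasis cs I).repr f y
      = ∑ u : parabolic cs I, (-1) ^ cs.length (u : W) * f (y * u) := by
  have hy' (j : B) (hj : j ∈ I) : ¬ cs.IsRightDescent y j :=
    fun hdesc => Set.notMem_empty j (hy ▸ ⟨hj, hdesc⟩)
  let signedSum : (W → ℝ) →ₗ[ℝ] ℝ :=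
    ∑ u : parabolic cs I, (-1 : ℝ) ^ cs.length (u : W) • LinearMap.proj (y * (u : W))
  have signedSum_apply (f : W → ℝ) :
      signedSum f = ∑ u : parabolic cs I, (-1) ^ cs.length (u : W) * f (y * u) := by
    rw [LinearMap.sum_apply]
    rfl
  suffices h : (descentBasis cs I).coord y = signedSum by
    rw [← signedSum_apply, ← h, Module.Basis.coord_apply]
  refine (descentBasis cs I).ext fun x => ?_
  rw [Module.Basis.coord_apply, Module.Basis.repr_self, signedSum_apply, descentBasis_apply]
  rcases (descents cs I x).eq_empty_or_nonempty with hx | ⟨i, hi⟩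
  · have hx' (j : B) (hj : j ∈ I) : ¬ cs.IsRightDescent x j :=
      fun hdesc => Set.notMem_empty j (hx ▸ ⟨hj, hdesc⟩)
    rw [descentIndicator_of_descents_eq_empty cs hx, Finset.sum_eq_single 1]
    · simp [Pi.single_apply, Finsupp.single_apply, eq_comm]
    · intro u _ hu
      rw [Pi.single_eq_of_ne, mul_zero]
      rintro rfl
      exact hu (Subtype.ext (eq_one_of_mul_no_descents cs hy' u.2 hx'))
    · exact fun h => absurd (Finset.mem_univ _) h
  · have hne : x ≠ y := fun h => Set.notMem_empty i (hy ▸ h ▸ hi)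
    rw [Finsupp.single_eq_of_ne hne.symm]
    let s : parabolic cs I := ⟨cs.simple i, simple_mem_parabolic cs hi.1⟩
    refine (Finset.sum_involution (fun u _ => u * s) (fun u _ => ?_) (fun u _ _ hu => ?_)
      (fun _ _ => Finset.mem_univ _) fun u _ => ?_).symm
    · rw [Subgroup.coe_mul, ← mul_assoc, descentIndicator_mem_rightInvariants cs subset_rfl _ _
        (simple_mem_parabolic cs hi), neg_one_pow_length_mul, cs.length_simple]
      ring
    · have h : cs.simple i = 1 := congrArg Subtype.val (mul_eq_left.1 hu)
      exact zero_ne_one (cs.length_eq_zero_iff.2 h ▸ cs.length_simple i)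
    · exact Subtype.ext (cs.simple_mul_simple_cancel_right i)

/-- The operator with kernel `χ (y * σ x⁻¹)`. It represents `∑ z, χ z • (z σ)`, where `z σ` acts
on functions by translating along `x ↦ z * σ x`. -/
def twistedConvolution (σ : DiagramAut cs) (χ : W → ℝ) : (W → ℝ) →ₗ[ℝ] (W → ℝ) :=
  Matrix.toLin' (Matrix.of fun y x => χ (y * (σ.toMulEquiv x)⁻¹))

variable (σ : DiagramAut cs) (χ : W → ℝ)

theorem twistedConvolution_apply (f : W → ℝ) (y : W) :
    twistedConvolution cs σ χ f y = ∑ x, χ (y * (σ.toMulEquiv x)⁻¹) * f x := by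
  rw [twistedConvolution, Matrix.toLin'_apply]
  rfl

theorem twistedConvolution_mem_rightInvariants {f : W → ℝ} (hf : f ∈ rightInvariants cs K) :
    twistedConvolution cs σ χ f ∈ rightInvariants cs (σ.perm '' K) := by
  rintro y _ hu
  rw [← σ.map_parabolic] at hu
  obtain ⟨u, hu, rfl⟩ := hu
  rw [twistedConvolution_apply, twistedConvolution_apply, ← Equiv.sum_comp (Equiv.mulRight u)]
  refine Fintype.sum_congr _ _ fun x => ?_
  change χ (y * σ.toMulEquiv u * (σ.toMulEquiv (x * u))⁻¹) * f (x * u) = _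
  rw [hf x u hu, map_mul, mul_inv_rev, ← mul_assoc, mul_inv_cancel_right]

theorem repr_twistedConvolution_eq_zero {y : W} {i : B} (hi : i ∈ descents cs I y)
    (hσi : σ.perm i ∈ I \ descents cs I y) :
    (descentBasis cs I).repr (twistedConvolution cs σ χ (descentIndicator cs I y)) y = 0 := by
  have hinv : twistedConvolution cs σ χ (descentIndicator cs I y)
      ∈ rightInvariants cs {σ.perm i} := by
    rw [← Set.image_singleton]
    exact twistedConvolution_mem_rightInvariants cs σ χ
      (descentIndicator_mem_rightInvariants cs (Set.singleton_subset_iff.2 hi))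
  exact descentBasis_repr_eq_zero cs (Set.singleton_subset_iff.2 hσi.1) hinv
    fun h => hσi.2 (Set.singleton_subset_iff.1 h)

theorem trace_average_comp_eq_sum {T T₀ : Finset σ.Orbit} (hT : T ⊆ T₀) :
    LinearMap.trace ℝ _ (average cs (σ.union T) fun u =>
        LinearMap.funLeft ℝ ℝ (· * u) ∘ₗ twistedConvolution cs σ χ)
      = ∑ y, if σ.union T ⊆ descents cs (σ.union T₀) y then
          (descentBasis cs (σ.union T₀)).repr
            (twistedConvolution cs σ χ (descentIndicator cs (σ.union T₀) y)) y
        else 0 := by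
  have average_apply (f : W → ℝ) (x : W) :
      average cs (σ.union T)
          (fun u => LinearMap.funLeft ℝ ℝ (· * u) ∘ₗ twistedConvolution cs σ χ) f x
        = average cs (σ.union T) fun u => twistedConvolution cs σ χ f (x * u) := by
    simp only [average, LinearMap.smul_apply, LinearMap.sum_apply, Pi.smul_apply, Finset.sum_apply]
    rfl
  rw [LinearMap.trace_eq_matrix_trace ℝ (descentBasis cs (σ.union T₀)), Matrix.trace]
  refine Fintype.sum_congr _ _ fun y => ?_
  rw [Matrix.diag_apply, LinearMap.toMatrix_apply, descentBasis_apply]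
  split_ifs with hy
  · have hinv := twistedConvolution_mem_rightInvariants cs σ χ
      (descentIndicator_mem_rightInvariants cs hy)
    rw [σ.image_union] at hinv
    congr 2
    funext x
    rw [average_apply, average_congr cs (hinv x), average_const]
  · refine descentBasis_repr_eq_zero cs (σ.union_mono hT) (fun x u hu => ?_) hy
    rw [average_apply, average_apply]
    conv_rhs => rw [← average_mul_left cs hu]
    simp only [mul_assoc]

variable {χ}

theorem trace_average_comp (hχ : ∀ x w, χ (x * w * (σ.toMulEquiv x)⁻¹) = χ w) (J : Set B) :
    LinearMap.trace ℝ _ (average cs J fun u =>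
        LinearMap.funLeft ℝ ℝ (· * u) ∘ₗ twistedConvolution cs σ χ)
      = Fintype.card W * average cs J χ := by
  have trace_comp (u : W) : LinearMap.trace ℝ _
      (LinearMap.funLeft ℝ ℝ (· * u) ∘ₗ twistedConvolution cs σ χ) = Fintype.card W * χ u := by
    have h : LinearMap.funLeft ℝ ℝ (· * u) ∘ₗ twistedConvolution cs σ χ
        = Matrix.toLin' (Matrix.of fun y x => χ (y * u * (σ.toMulEquiv x)⁻¹)) := rfl
    rw [h, Matrix.trace_toLin'_eq, Matrix.trace]
    simp only [Matrix.diag_apply, Matrix.of_apply, hχ, Finset.sum_const, Finset.card_univ,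
      nsmul_eq_mul]
  rw [map_average]
  simp only [trace_comp]
  exact (map_average cs (LinearMap.mulLeft ℝ (Fintype.card W : ℝ)) χ).symm

theorem repr_twistedConvolution_of_descents_eq_empty
    (hχ : ∀ x w, χ (x * w * (σ.toMulEquiv x)⁻¹) = χ w) {y : W} (hy : descents cs I y = ∅) :
    (descentBasis cs I).repr (twistedConvolution cs σ χ (descentIndicator cs I y)) y
      = ∑ u : parabolic cs I, (-1) ^ cs.length (u : W) * χ u := by
  rw [descentBasis_repr_of_descents_eq_empty cs hy, descentIndicator_of_descents_eq_empty cs hy]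
  refine Fintype.sum_congr _ _ fun u => ?_
  rw [twistedConvolution_apply, Finset.sum_eq_single y, Pi.single_eq_same, mul_one, hχ]
  · exact fun x _ hx => by rw [Pi.single_eq_of_ne hx, mul_zero]
  · exact fun h => absurd (Finset.mem_univ _) h

theorem repr_twistedConvolution_mul_sum (hχ : ∀ x w, χ (x * w * (σ.toMulEquiv x)⁻¹) = χ w)
    (T₀ : Finset σ.Orbit) (y : W) :
    (descentBasis cs (σ.union T₀)).repr
          (twistedConvolution cs σ χ (descentIndicator cs (σ.union T₀) y)) y
        * ∑ T ∈ T₀.powerset,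
            (if σ.union T ⊆ descents cs (σ.union T₀) y then (-1) ^ T.card else 0)
      = if descents cs (σ.union T₀) y = ∅ then
          ∑ u : parabolic cs (σ.union T₀), (-1) ^ cs.length (u : W) * χ u
        else 0 := by
  have := finite_of_coxeterSystem cs
  by_cases hy : ∀ i ∈ descents cs (σ.union T₀) y, σ.perm i ∈ descents cs (σ.union T₀) y
  · rw [sum_powerset_neg_one_pow_of_union_subset σ hy fun i hi => hi.1, mul_ite, mul_one, mul_zero]
    exact ite_congr rfl (repr_twistedConvolution_of_descents_eq_empty cs σ hχ) fun _ => rfl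
  · push Not at hy
    obtain ⟨i, hi, hσi⟩ := hy
    rw [if_neg (Set.nonempty_of_mem hi).ne_empty,
      repr_twistedConvolution_eq_zero cs σ χ hi ⟨σ.perm_mem_union.2 hi.1, hσi⟩, zero_mul]

/-- The trace of `twistedConvolution`, composed with the projection onto the `W_T`-invariant
functions, is evaluated both in the basis of delta functions and in `descentBasis`. -/
theorem sum_neg_one_pow_mul_average (hχ : ∀ x w, χ (x * w * (σ.toMulEquiv x)⁻¹) = χ w)
    (T₀ : Finset σ.Orbit) :
    ∑ T ∈ T₀.powerset, (-1) ^ T.card * average cs (σ.union T) χ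
      = average cs (σ.union T₀) fun w => (-1) ^ cs.length w * χ w := by
  set I := σ.union T₀
  let diag (y : W) : ℝ :=
    (descentBasis cs I).repr (twistedConvolution cs σ χ (descentIndicator cs I y)) y
  let signedSum : ℝ := ∑ u : parabolic cs I, (-1) ^ cs.length (u : W) * χ u
  have hcard : (Fintype.card W : ℝ) ≠ 0 := Nat.cast_ne_zero.2 Fintype.card_ne_zero
  refine mul_left_cancel₀ hcard ?_
  calc Fintype.card W * ∑ T ∈ T₀.powerset, (-1) ^ T.card * average cs (σ.union T) χ
      = ∑ T ∈ T₀.powerset, (-1) ^ T.card *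
          ∑ y, if σ.union T ⊆ descents cs I y then diag y else 0 := by
        rw [Finset.mul_sum]
        refine Finset.sum_congr rfl fun T hT => ?_
        rw [mul_left_comm, ← trace_average_comp cs σ hχ,
          trace_average_comp_eq_sum cs σ χ (Finset.mem_powerset.1 hT)]
    _ = ∑ y, if descents cs I y = ∅ then signedSum else 0 := by
        simp only [I, signedSum, ← repr_twistedConvolution_mul_sum cs σ hχ, Finset.mul_sum]
        rw [Finset.sum_comm]
        simp only [I, diag, mul_ite, ite_mul, mul_zero, zero_mul, mul_comm ((-1 : ℝ) ^ _)]
    _ = (minReps cs Set.univ I).card * signedSum := by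
        rw [← Finset.sum_filter, Finset.sum_const, nsmul_eq_mul]
        congr 3
        ext y
        simp [minReps, parabolic_univ, descents, Set.eq_empty_iff_forall_notMem]
    _ = Fintype.card W * average cs I fun w => (-1) ^ cs.length w * χ w := by
        have hcardI : (Fintype.card (parabolic cs I) : ℝ) ≠ 0 :=
          Nat.cast_ne_zero.2 Fintype.card_ne_zero
        rw [← card_minReps_mul_card cs I, Nat.cast_mul, average, smul_eq_mul, mul_assoc,
          mul_inv_cancel_left₀ hcardI]

theorem sum_neg_one_pow_smul_average {E : Type*} [AddCommGroup E] [Module ℝ E] {χ : W → E}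
    (hχ : ∀ x w, χ (x * w * (σ.toMulEquiv x)⁻¹) = χ w) (T₀ : Finset σ.Orbit) :
    ∑ T ∈ T₀.powerset, (-1 : ℝ) ^ T.card • average cs (σ.union T) χ
      = average cs (σ.union T₀) fun w => (-1 : ℝ) ^ cs.length w • χ w := by
  rw [← sub_eq_zero, ← Module.forall_dual_apply_eq_zero_iff ℝ]
  intro φ
  simp only [map_sub, map_sum, map_smul, map_average, smul_eq_mul]
  rw [sum_neg_one_pow_mul_average cs σ (fun x w => congrArg φ (hχ x w)), sub_self]

end

section

variable {B W : Type*} [Group W] {M : CoxeterMatrix B} (cs : CoxeterSystem M W)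
  {I J : Set B}

/-! ### Steinberg's formula -/

/-- The elements of `I` that are not right descents of `w`. -/
def ascents (I : Set B) (w : W) : Set B :=
  {i ∈ I | ¬ cs.IsRightDescent w i}

theorem isLongest_iff_ascents_eq_empty {y : W} :
    IsLongest cs I y ↔ y ∈ parabolic cs I ∧ ascents cs I y = ∅ := by
  simp [IsLongest, ascents, Set.eq_empty_iff_forall_notMem]

theorem map_eq_of_isLongest (σ : DiagramAut cs) {T : Finset σ.Orbit} {w : W}
    (hw : IsLongest cs (σ.union T) w) : σ.toMulEquiv w = w := by
  refine IsLongest.unique ⟨σ.map_mem_parabolic_union.2 hw.1, ?_⟩ hw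
  rw [← σ.image_union, Set.forall_mem_image]
  exact fun j hj => σ.isRightDescent_iff.2 (hw.2 j hj)

variable [Fintype W]

variable {cs} in
theorem minReps_self : minReps cs I I = {1} := by
  ext y
  rw [mem_minReps, Finset.mem_singleton]
  refine ⟨fun ⟨hy, hdesc⟩ => ?_, ?_⟩
  · have h1 (j : B) (_ : j ∈ I) : ¬ cs.IsRightDescent 1 j := cs.not_isRightDescent_one j
    exact eq_one_of_mul_no_descents cs h1 hy (by rwa [one_mul])
  · rintro rfl
    exact ⟨one_mem _, fun j _ => cs.not_isRightDescent_one j⟩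

/-- The values at `q` of the Poincaré polynomial of the set of `τ`-fixed elements of `W_J`. -/
def fixedPoincare {R : Type*} [CommRing R] (q : R) (τ : W → W) (J : Set B) : R :=
  ∑ w : parabolic cs J, if τ w = w then q ^ cs.length (w : W) else 0

section

variable {R : Type*} [CommRing R] (q : R) (σ : DiagramAut cs)

/-- The Poincaré polynomial, at `q`, of the `σ`-fixed minimal coset representatives. -/
def fixedMinRepsPoincare (I J : Set B) : R :=
  ∑ y ∈ minReps cs I J, if σ.toMulEquiv y = y then q ^ cs.length y else 0

theorem fixedMinRepsPoincare_mul {T T₀ : Finset σ.Orbit} (hT : T ⊆ T₀) :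
    fixedMinRepsPoincare cs q σ (σ.union T₀) (σ.union T)
        * fixedPoincare cs q σ.toMulEquiv (σ.union T)
      = fixedPoincare cs q σ.toMulEquiv (σ.union T₀) := by
  rw [fixedMinRepsPoincare, fixedPoincare, fixedPoincare,
    sum_parabolic_eq_sum_minReps cs (σ.union_mono hT)
      fun w => if σ.toMulEquiv w = w then q ^ cs.length w else 0, Finset.sum_mul_sum]
  refine Finset.sum_congr rfl fun y hy => Fintype.sum_congr _ _ fun u => ?_
  have hydesc := ((mem_minReps cs).1 hy).2
  have hfixed : σ.toMulEquiv (y * u) = y * u ↔ σ.toMulEquiv y = y ∧ σ.toMulEquiv (u : W) = u := by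
    refine ⟨fun h => ?_, fun ⟨hy, hu⟩ => by rw [map_mul, hy, hu]⟩
    have hσy : σ.toMulEquiv y = y * (u * (σ.toMulEquiv (u : W))⁻¹) := by
      rw [← mul_assoc, ← h, map_mul, mul_inv_cancel_right]
    have hu : (u * (σ.toMulEquiv (u : W))⁻¹ : W) = 1 := by
      refine eq_one_of_mul_no_descents cs hydesc
        (mul_mem u.2 (inv_mem (σ.map_mem_parabolic_union.2 u.2))) ?_
      rw [← hσy, ← σ.image_union, Set.forall_mem_image]
      exact fun j hj => σ.isRightDescent_iff.not.2 (hydesc j hj)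
    exact ⟨by rw [hσy, hu, mul_one], (mul_inv_eq_one.1 hu).symm⟩
  rw [length_mul_of_no_descents cs hydesc u.2, pow_add, if_congr hfixed rfl rfl, ite_and,
    ite_zero_mul, mul_ite_zero]

theorem fixedMinRepsPoincare_eq_sum_ascents (hJ : J ⊆ I) :
    fixedMinRepsPoincare cs q σ I J
      = ∑ y with y ∈ parabolic cs I ∧ σ.toMulEquiv y = y,
          if J ⊆ ascents cs I y then q ^ cs.length y else 0 := by
  rw [fixedMinRepsPoincare, ← Finset.sum_filter, ← Finset.sum_filter]
  refine Finset.sum_congr (Finset.ext fun y => ?_) fun _ _ => rfl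
  rw [Finset.mem_filter, Finset.mem_filter, mem_minReps, Finset.mem_filter_univ, and_right_comm]
  exact and_congr_right fun _ => forall₂_congr fun i hi => (and_iff_right (hJ hi)).symm

theorem sum_neg_one_pow_mul_fixedMinRepsPoincare (T₀ : Finset σ.Orbit) :
    ∑ T ∈ T₀.powerset, (-1) ^ T.card * fixedMinRepsPoincare cs q σ (σ.union T₀) (σ.union T)
      = q ^ (posRoots cs (σ.union T₀)).card := by
  have := finite_of_coxeterSystem cs
  set I := σ.union T₀
  let fixed : Finset W := {y | y ∈ parabolic cs I ∧ σ.toMulEquiv y = y}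
  have mem_fixed {y : W} : y ∈ fixed ↔ y ∈ parabolic cs I ∧ σ.toMulEquiv y = y :=
    Finset.mem_filter_univ y
  have ascents_stable {y : W} (hy : y ∈ fixed) :
      ∀ i ∈ ascents cs I y, σ.perm i ∈ ascents cs I y := by
    rintro i ⟨hi, hdesc⟩
    refine ⟨σ.perm_mem_union.2 hi, ?_⟩
    rwa [← (mem_fixed.1 hy).2, σ.isRightDescent_iff]
  obtain ⟨w, hw⟩ := exists_isLongest cs I
  calc ∑ T ∈ T₀.powerset, (-1) ^ T.card * fixedMinRepsPoincare cs q σ I (σ.union T)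
      = ∑ y ∈ fixed, q ^ cs.length y *
          ∑ T ∈ T₀.powerset, if σ.union T ⊆ ascents cs I y then (-1) ^ T.card else 0 := by
        simp only [Finset.mul_sum]
        rw [Finset.sum_comm]
        refine Finset.sum_congr rfl fun T hT => ?_
        rw [fixedMinRepsPoincare_eq_sum_ascents cs q σ (σ.union_mono (Finset.mem_powerset.1 hT)),
          Finset.mul_sum]
        exact Finset.sum_congr rfl fun y _ => by rw [mul_ite, mul_zero, mul_ite, mul_zero, mul_comm]
    _ = ∑ y ∈ fixed, if ascents cs I y = ∅ then q ^ cs.length y else 0 := by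
        refine Finset.sum_congr rfl fun y hy => ?_
        rw [sum_powerset_neg_one_pow_of_union_subset σ (ascents_stable hy) fun i hi => hi.1,
          mul_ite, mul_one, mul_zero]
    _ = q ^ (posRoots cs I).card := by
        rw [Finset.sum_eq_single w, if_pos ((isLongest_iff_ascents_eq_empty cs).1 hw).2,
          hw.card_posRoots]
        · exact fun y hy hne => if_neg fun h => hne
            (((isLongest_iff_ascents_eq_empty cs).2 ⟨(mem_fixed.1 hy).1, h⟩).unique hw)
        · exact fun h => absurd (mem_fixed.2 ⟨hw.1, map_eq_of_isLongest cs σ hw⟩) h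

end

theorem fixedPoincare_empty {R : Type*} [CommRing R] (q : R) (σ : DiagramAut cs) :
    fixedPoincare cs q σ.toMulEquiv ∅ = 1 := by
  have hbot (w : parabolic cs ∅) : (w : W) = 1 := by
    rw [← Subgroup.mem_bot, ← parabolic_empty cs]
    exact w.2
  have : Unique (parabolic cs ∅) := ⟨⟨1⟩, fun w => Subtype.ext (hbot w)⟩
  rw [fixedPoincare, Fintype.sum_unique, hbot, map_one, if_pos rfl, cs.length_one, pow_zero]

theorem average_empty {E : Type*} [AddCommGroup E] [Module ℝ E] (χ : W → E) :
    average cs ∅ χ = χ 1 := by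
  rw [← average_const cs ∅ (χ 1)]
  refine average_congr cs fun w hw => ?_
  rw [parabolic_empty, Subgroup.mem_bot] at hw
  rw [hw]

open PowerSeries in
/-- Both sides satisfy the same recursion over the parabolic subgroups, because
`sum_neg_one_pow_smul_average` and `sum_neg_one_pow_mul_fixedMinRepsPoincare` have the same shape
once antiinvariants are replaced by invariants. -/
theorem fixedPoincare_mul_average_twistedMolien [Fintype B] (σ : DiagramAut cs)
    (T₀ : Finset σ.Orbit) :
    fixedPoincare cs (X : ℝ⟦X⟧) σ.toMulEquiv (σ.union T₀)
        * average cs (σ.union T₀) (twistedMolien cs σ) = twistedMolien cs σ 1 := by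
  induction T₀ using Finset.strongInduction with
  | H T₀ ih =>
  rcases T₀.eq_empty_or_nonempty with rfl | hT₀
  · rw [σ.union_empty, fixedPoincare_empty, average_empty, one_mul]
  let N := (posRoots cs (σ.union T₀)).card
  let P (T : Finset σ.Orbit) := fixedPoincare cs (X : ℝ⟦X⟧) σ.toMulEquiv (σ.union T)
  let Q (T : Finset σ.Orbit) := fixedMinRepsPoincare cs (X : ℝ⟦X⟧) σ (σ.union T₀) (σ.union T)
  let av (T : Finset σ.Orbit) := average cs (σ.union T) (twistedMolien cs σ)
  let defect (T : Finset σ.Orbit) := P T * av T - twistedMolien cs σ 1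
  have hav : ∑ T ∈ T₀.powerset, (-1) ^ T.card * av T = X ^ N * av T₀ := by
    have h := sum_neg_one_pow_smul_average cs σ (twistedMolien_conj cs σ) T₀
    rw [average_neg_one_pow_smul_twistedMolien] at h
    simpa [Algebra.smul_def] using h
  have hQ : ∑ T ∈ T₀.powerset, (-1) ^ T.card * Q T = X ^ N :=
    sum_neg_one_pow_mul_fixedMinRepsPoincare cs X σ T₀
  have hself : Q T₀ = 1 := by
    simp [Q, fixedMinRepsPoincare, minReps_self]
  have hrec : (X ^ N - (-1) ^ T₀.card) * defect T₀ = 0 := by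
    rw [sub_mul, sub_eq_zero]
    calc X ^ N * defect T₀
        = P T₀ * (X ^ N * av T₀) - X ^ N * twistedMolien cs σ 1 := by ring
      _ = ∑ T ∈ T₀.powerset, (-1) ^ T.card * Q T * defect T := by
          rw [← hav, ← hQ, Finset.mul_sum, Finset.sum_mul, ← Finset.sum_sub_distrib]
          refine Finset.sum_congr rfl fun T hT => ?_
          rw [show P T₀ = Q T * P T from
            (fixedMinRepsPoincare_mul cs X σ (Finset.mem_powerset.1 hT)).symm]
          ring
      _ = (-1) ^ T₀.card * defect T₀ := by
          rw [Finset.sum_eq_single_of_mem T₀ (Finset.mem_powerset_self T₀), hself, mul_one]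
          intro T hT hne
          rw [show defect T = 0 from
            sub_eq_zero.2 (ih T ((Finset.mem_powerset.1 hT).ssubset_of_ne hne)), mul_zero]
  refine sub_eq_zero.1 ((mul_eq_zero.1 hrec).resolve_left fun h => ?_)
  have hN : N ≠ 0 := (card_posRoots_pos cs (σ.union_nonempty hT₀)).ne'
  simpa [hN] using congrArg constantCoeff h

end

section

variable {B W : Type*} [Group W] {M : CoxeterMatrix B} {cs : CoxeterSystem M W}

/-! ### Conjugation by the longest element -/

theorem coxeterMatrix_eq_of_rootForm_eq {i j i' j' : B}
    (h : rootForm M (simpleRoot i) (simpleRoot j) = rootForm M (simpleRoot i') (simpleRoot j')) :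
    M i j = M i' j' := by
  have hmem (m : ℕ) : Real.pi / m ∈ Set.Icc 0 Real.pi :=
    ⟨by positivity, div_nat_le_self_of_nonnneg Real.pi_nonneg m⟩
  rw [rootForm_simpleRoot, rootForm_simpleRoot, mul_right_inj' (by norm_num)] at h
  have hdiv := Real.injOn_cos (hmem _) (hmem _) h
  rwa [div_eq_mul_inv, div_eq_mul_inv, mul_right_inj' Real.pi_ne_zero, inv_inj,
    Nat.cast_inj] at hdiv

namespace IsLongest

variable {J : Set B} {w : W}

theorem mul_self (hw : IsLongest cs J w) : w * w = 1 :=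
  cs.length_eq_zero_iff.1 (by simpa using hw.length_mul hw.1)

theorem inv_eq (hw : IsLongest cs J w) : w⁻¹ = w :=
  inv_eq_of_mul_eq_one_right hw.mul_self

theorem exists_conj_simple (hw : IsLongest cs J w) {i : B} (hi : i ∈ J) :
    ∃ j, w * cs.simple i * w⁻¹ = cs.simple j := by
  have hdesc := cs.isRightDescent_iff.1 (hw.2 i hi)
  have hlen := hw.length_mul (mul_mem (simple_mem_parabolic cs hi) (inv_mem hw.1))
  rw [← mul_assoc, ← cs.length_inv (cs.simple i * w⁻¹), mul_inv_rev, inv_inv, cs.inv_simple]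
    at hlen
  exact cs.length_eq_one_iff.1 (by omega)

theorem geomRep_simpleRoot (hw : IsLongest cs J w) {i j : B} (hi : i ∈ J)
    (hconj : w * cs.simple i * w⁻¹ = cs.simple j) :
    geomRep cs w (simpleRoot i) = -simpleRoot j := by
  have hneg := geomRep_simpleRoot_nonpos cs (hw.2 i hi)
  rw [← neg_inj, neg_neg, ← geomRep_mul_simple_simpleRoot]
  have hroot : geomRep cs (w * cs.simple i) (simpleRoot i) ∈ roots cs Set.univ :=
    ⟨_, by rw [parabolic_univ]; trivial, i, Set.mem_univ i, rfl⟩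
  by_contra hne
  have h := geomRep_simple_nonneg_of_mem_roots hroot
    (by rwa [geomRep_mul_simple_simpleRoot, Left.nonneg_neg_iff]) (Set.mem_univ j) hne
  rw [← hconj, ← geomRep_mul_apply, ← mul_assoc, inv_mul_cancel_right, mul_assoc,
    cs.simple_mul_simple_self, mul_one] at h
  exact geomRep_simpleRoot_ne_zero cs w i (le_antisymm hneg h)

variable (hw : IsLongest cs Set.univ w)

/-- The vertex `j` with `w s_i w⁻¹ = s_j`. -/
def conjVertex (i : B) : B :=
  (hw.exists_conj_simple (Set.mem_univ i)).choose

theorem conj_simple (i : B) : w * cs.simple i * w⁻¹ = cs.simple (hw.conjVertex i) :=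
  (hw.exists_conj_simple (Set.mem_univ i)).choose_spec

theorem conjVertex_involutive : Function.Involutive hw.conjVertex := by
  intro i
  apply simple_injective cs
  rw [← hw.conj_simple, ← hw.conj_simple, hw.inv_eq, ← mul_assoc, ← mul_assoc, hw.mul_self, one_mul,
    mul_assoc, hw.mul_self, mul_one]

/-- Conjugation by the longest element, which permutes the simple reflections. -/
def conj : DiagramAut cs where
  toMulEquiv := MulAut.conj w
  perm := hw.conjVertex_involutive.toPerm
  map_simple := hw.conj_simple
  matrix_apply i j := by
    refine coxeterMatrix_eq_of_rootForm_eq ?_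
    rw [← rootForm_geomRep cs w (simpleRoot i),
      hw.geomRep_simpleRoot (Set.mem_univ i) (hw.conj_simple i),
      hw.geomRep_simpleRoot (Set.mem_univ j) (hw.conj_simple j), map_neg, map_neg,
      LinearMap.neg_apply, neg_neg]
    rfl

theorem geomRep_eq_neg_onRoots (v : B →₀ ℝ) : geomRep cs w v = -hw.conj.onRoots v := by
  suffices (geomRep cs w).toLinearMap = -hw.conj.onRoots.toLinearMap from
    LinearMap.congr_fun this v
  ext1 i
  ext1
  exact (hw.geomRep_simpleRoot (Set.mem_univ i) (hw.conj.map_simple i)).trans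
    (congrArg Neg.neg (hw.conj.onRoots_simpleRoot i).symm)

end IsLongest

end

section

variable {B W : Type*} [Group W] {M : CoxeterMatrix B}

/-! ### The Poincaré polynomial of the centralizer of the longest element -/

open PowerSeries

section

variable [Fintype B] {cs : CoxeterSystem M W} {w : W}

theorem twistedMolien_refl (u : W) :
    twistedMolien cs (DiagramAut.refl cs) u = molienSeries (geomRep cs u).toLinearMap := by
  have hrefl : (DiagramAut.refl cs).onRoots.toLinearMap = 1 := LinearMap.ext fun v =>
    (DiagramAut.onRoots_apply _ v).trans Finsupp.mapDomain_id
  rw [twistedMolien, hrefl, mul_one]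

theorem twistedMolien_refl_one_mul :
    twistedMolien cs (DiagramAut.refl cs) 1 * (1 - X) ^ Fintype.card B = 1 := by
  rw [twistedMolien_refl, map_one]
  exact molienSeries_one_mul

variable (hw : IsLongest cs Set.univ w)

theorem twistedMolien_conj_mul (u : W) :
    twistedMolien cs hw.conj (w * u) = rescale (-1) (twistedMolien cs (DiagramAut.refl cs) u) := by
  have hneg : hw.conj.onRoots.toLinearMap * (geomRep cs w).toLinearMap = (-1 : ℝ) • 1 := by
    refine LinearMap.ext fun v => ?_
    change hw.conj.onRoots (geomRep cs w v) = (-1 : ℝ) • v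
    rw [neg_one_smul, eq_neg_iff_add_eq_zero, ← neg_eq_iff_add_eq_zero,
      ← hw.geomRep_eq_neg_onRoots, ← geomRep_mul_apply, hw.mul_self, map_one, LinearEquiv.coe_one,
      id]
  have hmul : (geomRep cs (w * u)).toLinearMap
      = (geomRep cs w).toLinearMap * (geomRep cs u).toLinearMap := by
    rw [map_mul]
    rfl
  rw [twistedMolien_refl, twistedMolien, hmul, mul_assoc, molienSeries_mul_comm, mul_assoc, hneg,
    ← molienSeries_smul, mul_smul_comm, mul_one]

theorem exists_twistedMolien_conj_one_mul :
    ∃ a b : ℕ, a + b = Fintype.card B ∧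
      twistedMolien cs hw.conj 1 * ((1 - X) ^ a * (1 + X) ^ b) = 1 := by
  have hinv : hw.conj.onRoots.toLinearMap * hw.conj.onRoots.toLinearMap = 1 := by
    refine LinearMap.ext fun v => ?_
    change hw.conj.onRoots (hw.conj.onRoots v) = v
    rw [← neg_neg (hw.conj.onRoots (hw.conj.onRoots v)), ← map_neg, ← hw.geomRep_eq_neg_onRoots,
      ← hw.geomRep_eq_neg_onRoots, ← geomRep_mul_apply, hw.mul_self, map_one, LinearEquiv.coe_one,
      id]
  obtain ⟨a, b, hab, h⟩ := molienSeries_of_involution hinv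
  refine ⟨a, b, hab, ?_⟩
  rwa [twistedMolien, map_one, show (1 : (B →₀ ℝ) ≃ₗ[ℝ] (B →₀ ℝ)).toLinearMap = 1 from rfl, one_mul]

end

variable [Fintype W]

theorem fixedPoincare_univ (cs : CoxeterSystem M W) {R : Type*} [CommRing R] (q : R) (τ : W → W) :
    fixedPoincare cs q τ Set.univ = ∑ w, if τ w = w then q ^ cs.length w else 0 := by
  have huniv (w : W) : w ∈ parabolic cs Set.univ := by
    rw [parabolic_univ]
    exact Subgroup.mem_top w
  exact Fintype.sum_equiv (Equiv.subtypeUnivEquiv huniv) _ _ fun _ => rfl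

theorem map_fixedPoincare (cs : CoxeterSystem M W) {R S : Type*} [CommRing R] [CommRing S]
    (f : R →+* S) (q : R) (τ : W → W) (J : Set B) :
    f (fixedPoincare cs q τ J) = fixedPoincare cs (f q) τ J := by
  simp only [fixedPoincare, map_sum, apply_ite f, map_pow, map_zero]

theorem fixedPoincare_univ_mul_average [Fintype B] (cs : CoxeterSystem M W) (σ : DiagramAut cs) :
    fixedPoincare cs (X : ℝ⟦X⟧) σ.toMulEquiv Set.univ
        * average cs Set.univ (twistedMolien cs σ) = twistedMolien cs σ 1 := by
  have : Finite σ.Orbit := Quotient.finite _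
  have := Fintype.ofFinite σ.Orbit
  rw [← σ.union_univ]
  exact fixedPoincare_mul_average_twistedMolien cs σ Finset.univ

variable {cs : CoxeterSystem M W} {w : W} (hw : IsLongest cs Set.univ w)

theorem average_twistedMolien_conj [Fintype B] :
    average cs Set.univ (twistedMolien cs hw.conj)
      = rescale (-1) (average cs Set.univ (twistedMolien cs (DiagramAut.refl cs))) := by
  rw [← average_mul_left cs hw.1, funext (twistedMolien_conj_mul hw), ← coe_rescaleAlgHom]
  exact (map_average cs (rescaleAlgHom (-1 : ℝ)).toLinearMap _).symm

theorem exists_fixedPoincare_conj_mul_pow :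
    ∃ a : ℕ, fixedPoincare cs (X : ℝ⟦X⟧) hw.conj.toMulEquiv Set.univ * (1 - X) ^ a
      = fixedPoincare cs (-X) (DiagramAut.refl cs).toMulEquiv Set.univ * (1 + X) ^ a := by
  have := finite_of_coxeterSystem cs
  have := Fintype.ofFinite B
  obtain ⟨a, b, hab, hconj⟩ := exists_twistedMolien_conj_one_mul hw
  have hrefl := congrArg (rescale (-1)) (twistedMolien_refl_one_mul (cs := cs))
  rw [← fixedPoincare_univ_mul_average, average_twistedMolien_conj] at hconj
  rw [← fixedPoincare_univ_mul_average, map_mul, map_mul, map_fixedPoincare, rescale_neg_one_X,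
    map_pow, map_sub, map_one, rescale_neg_one_X, sub_neg_eq_add, ← hab] at hrefl
  set average' := rescale (-1) (average cs Set.univ (twistedMolien cs (DiagramAut.refl cs)))
  refine ⟨a, mul_right_cancel₀ (b := average' * (1 + X) ^ b) (fun h => ?_) ?_⟩
  · refine one_ne_zero (α := ℝ⟦X⟧) ?_
    rw [← hconj]
    linear_combination (fixedPoincare cs X hw.conj.toMulEquiv Set.univ * (1 - X) ^ a) * h
  · linear_combination hconj - hrefl

end

section

open Polynomial

/-! ### Odd exponents as an order of vanishing -/

theorem rootMultiplicity_mul_one_sub_X_pow {R : Type*} [CommRing R] [IsDomain R] {f : R[X]}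
    (hf : f.eval 1 ≠ 0) (n : ℕ) : (f * (1 - X) ^ n).rootMultiplicity 1 = n := by
  have hf₀ : f ≠ 0 := fun h => hf (by rw [h, eval_zero])
  have hsign : (1 - X : R[X]) ^ n = C ((-1) ^ n) * (X - C 1) ^ n := by
    rw [C_pow, C_neg, C_1, ← mul_pow, neg_one_mul, neg_sub]
  have hunit : ((-1) ^ n : R) ≠ 0 := pow_ne_zero n (neg_ne_zero.2 one_ne_zero)
  rw [hsign, ← mul_assoc, rootMultiplicity_mul_X_sub_C_pow (mul_ne_zero hf₀ (C_ne_zero.2 hunit)),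
    rootMultiplicity_eq_zero, zero_add]
  rw [IsRoot, eval_mul, eval_C]
  exact mul_ne_zero hf hunit

theorem sum_range_two_mul_pow {R : Type*} [CommSemiring R] (y : R) (n : ℕ) :
    ∑ j ∈ Finset.range (2 * n), y ^ j = (1 + y) * ∑ j ∈ Finset.range n, (y ^ 2) ^ j := by
  induction n with
  | zero => simp
  | succ n ih =>
    rw [mul_add_one, Finset.sum_range_succ, Finset.sum_range_succ, ih, Finset.sum_range_succ]
    ring

theorem exists_sum_range_neg_X_pow_eq (e : ℕ) : ∃ h : ℤ[X], h.eval 1 ≠ 0 ∧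
    ∑ j ∈ Finset.range (e + 1), (-X : ℤ[X]) ^ j = h * (1 - X) ^ (if Odd e then 1 else 0) := by
  by_cases he : Odd e
  · obtain ⟨n, hn⟩ := he.add_one.two_dvd
    refine ⟨∑ j ∈ Finset.range n, ((-X) ^ 2) ^ j, ?_, ?_⟩
    · simp only [eval_finsetSum, eval_pow, eval_X, even_two, Even.neg_pow, one_pow,
        Finset.sum_const, Finset.card_range, nsmul_one]
      omega
    · rw [hn, sum_range_two_mul_pow, if_pos he, pow_one, mul_comm, sub_eq_add_neg]
  · refine ⟨_, ?_, by rw [if_neg he, pow_zero, mul_one]⟩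
    simp only [eval_finsetSum, eval_pow, eval_neg, eval_X, neg_one_geom_sum]
    rw [if_neg (by rwa [Nat.even_add_one, not_not, ← Nat.not_odd_iff_even])]
    exact one_ne_zero

theorem exists_prod_sum_range_neg_X_pow_eq {ι : Type*} [Fintype ι] (ex : ι → ℕ) :
    ∃ h : ℤ[X], h.eval 1 ≠ 0 ∧ ∏ i, ∑ j ∈ Finset.range (ex i + 1), (-X : ℤ[X]) ^ j
      = h * (1 - X) ^ (Finset.univ.filter fun i => Odd (ex i)).card := by
  choose h heval hfactor using fun i => exists_sum_range_neg_X_pow_eq (ex i)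
  refine ⟨∏ i, h i, ?_, ?_⟩
  · rw [eval_prod]
    exact Finset.prod_ne_zero_iff.2 fun i _ => heval i
  · rw [Finset.prod_congr rfl fun i _ => hfactor i, Finset.prod_mul_distrib,
      Finset.prod_pow_eq_pow_sum, Finset.card_filter]

variable {B W : Type*} [Group W] [Fintype W] {M : CoxeterMatrix B} {cs : CoxeterSystem M W} {w : W}

theorem exists_fixedPoincare_polynomial_conj_mul_pow (hw : IsLongest cs Set.univ w) :
    ∃ a : ℕ, fixedPoincare cs (X : ℤ[X]) hw.conj.toMulEquiv Set.univ * (1 - X) ^ a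
      = fixedPoincare cs (-X) (DiagramAut.refl cs).toMulEquiv Set.univ * (1 + X) ^ a := by
  let toSeries : ℤ[X] →+* PowerSeries ℝ :=
    (PowerSeries.map (Int.castRingHom ℝ)).comp coeToPowerSeries.ringHom
  have toSeries_X : toSeries X = PowerSeries.X := by
    simp [toSeries]
  have toSeries_injective : Function.Injective toSeries :=
    (PowerSeries.map_injective (Int.castRingHom ℝ) Int.cast_injective).comp (coe_injective ℤ)
  obtain ⟨a, ha⟩ := exists_fixedPoincare_conj_mul_pow hw
  refine ⟨a, toSeries_injective ?_⟩
  simpa only [map_mul, map_pow, map_sub, map_add, map_one, map_neg, map_fixedPoincare, toSeries_X]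
    using ha

theorem fixedPoincare_conj_mul_pow (hw : IsLongest cs Set.univ w) {ι : Type*} [Fintype ι]
    (ex : ι → ℕ)
    (hex : fixedPoincare cs (X : ℤ[X]) (DiagramAut.refl cs).toMulEquiv Set.univ
      = ∏ i, ∑ j ∈ Finset.range (ex i + 1), X ^ j) :
    fixedPoincare cs (X : ℤ[X]) hw.conj.toMulEquiv Set.univ
        * (1 - X) ^ (Finset.univ.filter fun i => Odd (ex i)).card
      = fixedPoincare cs (-X) (DiagramAut.refl cs).toMulEquiv Set.univ
        * (1 + X) ^ (Finset.univ.filter fun i => Odd (ex i)).card := by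
  obtain ⟨a, ha⟩ := exists_fixedPoincare_polynomial_conj_mul_pow hw
  obtain ⟨h, heval, hfactor⟩ := exists_prod_sum_range_neg_X_pow_eq ex
  have hneg : fixedPoincare cs (-X : ℤ[X]) (DiagramAut.refl cs).toMulEquiv Set.univ
      = ∏ i, ∑ j ∈ Finset.range (ex i + 1), (-X) ^ j := by
    have hcomp := congrArg (compRingHom (-X)) hex
    simpa only [map_fixedPoincare, map_prod, map_sum, map_pow, coe_compRingHom_apply, X_comp]
      using hcomp
  have hfixed : (fixedPoincare cs (X : ℤ[X]) hw.conj.toMulEquiv Set.univ).eval 1 ≠ 0 := by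
    rw [← coe_evalRingHom, map_fixedPoincare, coe_evalRingHom, eval_X, fixedPoincare_univ]
    simp only [one_pow, Finset.sum_boole, Nat.cast_ne_zero]
    exact Finset.card_ne_zero_of_mem ((Finset.mem_filter_univ 1).2 (map_one _))
  suffices a = (Finset.univ.filter fun i => Odd (ex i)).card by rwa [← this]
  rw [← rootMultiplicity_mul_one_sub_X_pow hfixed a, ha, hneg, hfactor, mul_right_comm,
    rootMultiplicity_mul_one_sub_X_pow]
  rw [eval_mul, eval_pow, eval_add, eval_one, eval_X]
  exact mul_ne_zero heval (pow_ne_zero a two_ne_zero)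

end

section

open Polynomial

/-! ### Transfer to standard parabolic subgroups -/

theorem finsum_subgroup_eq_sum {G' G A : Type*} [Group G'] [Fintype G'] [Group G]
    [AddCommMonoid A] {f : G' →* G} (hf : Function.Injective f) {H : Subgroup G} (hH : f.range = H)
    (g : G → A) : ∑ᶠ x, (if x ∈ H then g x else 0) = ∑ u, g (f u) :=
  calc
    ∑ᶠ x, (if x ∈ H then g x else 0) = ∑ᶠ x ∈ H, g x := finsum_congr fun _ => finsum_eq_if.symm
    _ = ∑ᶠ x ∈ Set.range f, g x := by rw [← hH]; rfl
    _ = ∑ᶠ u, g (f u) := finsum_mem_range hf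
    _ = ∑ u, g (f u) := finsum_eq_sum_of_fintype _

variable {B' W' B W : Type*} [Group W'] [Group W] {M' : CoxeterMatrix B'} {M : CoxeterMatrix B}
  {cs' : CoxeterSystem M' W'} {cs : CoxeterSystem M W} (φ : DiagramEmbedding cs' cs)

variable {H : Subgroup W} (hH : φ.toHom.range = H)

include hH

theorem DiagramEmbedding.isLongest_of_forall_length_le {w : W'}
    (hmax : ∀ u ∈ H, cs.length u ≤ cs.length (φ.toHom w)) : IsLongest cs' Set.univ w := by
  refine LY.isLongest_of_forall_length_le cs' (parabolic_univ cs' ▸ Subgroup.mem_top w) ?_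
  intro u _
  have hu : φ.toHom u ∈ H := hH ▸ φ.toHom.mem_range.2 ⟨u, rfl⟩
  simpa only [φ.length_map] using hmax (φ.toHom u) hu

variable [Fintype W'] {R : Type*} [CommRing R] (q : R)

theorem DiagramEmbedding.finsum_length :
    ∑ᶠ x, (if x ∈ H then q ^ cs.length x else 0)
      = fixedPoincare cs' q (DiagramAut.refl cs').toMulEquiv Set.univ := by
  rw [finsum_subgroup_eq_sum φ.injective hH, fixedPoincare_univ]
  exact Finset.sum_congr rfl fun u _ => by rw [φ.length_map]; exact (if_pos rfl).symm

theorem DiagramEmbedding.finsum_length_conj {w : W'} (hw : IsLongest cs' Set.univ w) :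
    ∑ᶠ x, (if x ∈ H ∧ φ.toHom w * x * φ.toHom w = x then q ^ cs.length x else 0)
      = fixedPoincare cs' q hw.conj.toMulEquiv Set.univ := by
  have hfixed (u : W') : φ.toHom w * φ.toHom u * φ.toHom w = φ.toHom u
      ↔ hw.conj.toMulEquiv u = u := by
    rw [← map_mul, ← map_mul, φ.injective.eq_iff]
    change _ ↔ w * u * w⁻¹ = u
    rw [hw.inv_eq]
  simp only [ite_and]
  rw [finsum_subgroup_eq_sum φ.injective hH, fixedPoincare_univ]
  exact Finset.sum_congr rfl fun u _ => by rw [φ.length_map, if_congr (hfixed u) rfl rfl]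

end

theorem P_L_Ad_wL_general {B W : Type*} [Group W] {M : CoxeterMatrix B} (cs : CoxeterSystem M W)
    {L : Set W} (hL : L ⊆ Set.range cs.simple) (hLfin : (Subgroup.closure L : Set W).Finite)
    {wL : W} (hwL_mem : wL ∈ Subgroup.closure L)
    (hwL_max : ∀ u ∈ Subgroup.closure L, cs.length u ≤ cs.length wL)
    {ι : Type*} [Fintype ι] (ex : ι → ℕ)
    (hex : (∑ᶠ x : W, if x ∈ Subgroup.closure L
          then (Polynomial.X : Polynomial ℤ) ^ cs.length x else 0)
        = ∏ i, ∑ j ∈ Finset.range (ex i + 1), (Polynomial.X : Polynomial ℤ) ^ j) :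
    (∑ᶠ x : W, if x ∈ Subgroup.closure L ∧ wL * x * wL = x
          then (Polynomial.X : Polynomial ℤ) ^ cs.length x else 0)
        * (1 - Polynomial.X) ^ (Finset.univ.filter fun i => Odd (ex i)).card
      = (∑ᶠ x : W, if x ∈ Subgroup.closure L
          then (-Polynomial.X : Polynomial ℤ) ^ cs.length x else 0)
        * (1 + Polynomial.X) ^ (Finset.univ.filter fun i => Odd (ex i)).card := by
  obtain ⟨J, rfl⟩ := Set.subset_range_iff_exists_image_eq.1 hL
  let φ := parabolicEmbedding cs J
  have hrange : φ.toHom.range = Subgroup.closure (cs.simple '' J) := range_parabolicEmbedding cs J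
  rw [← hrange] at hLfin
  have : Finite (restrictMatrix M J).Group := (Set.finite_range_iff φ.injective).1 hLfin
  have := Fintype.ofFinite (restrictMatrix M J).Group
  obtain ⟨w, rfl⟩ := hrange ▸ hwL_mem
  have hw := φ.isLongest_of_forall_length_le hrange hwL_max
  rw [φ.finsum_length hrange] at hex ⊢
  rw [φ.finsum_length_conj hrange _ hw]
  exact fixedPoincare_conj_mul_pow hw ex hex

/-- Let `L ⊊ S`, so that the subgroup `W_L` generated by `L` is a finite
Weyl group, with longest element `w_L`.  Then
`(Σ_{x ∈ W_L, w_L x w_L = x} q^{ℓ(x)}) (1−q)^{n_L} = (Σ_{x ∈ W_L} (−q)^{ℓ(x)}) (1+q)^{n_L}`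
as polynomials in `q`, where `n_L` is the number of odd exponents of `W_L`; i.e.
`P_{L,Ad(w_L)}(q) = P_L(−q)·((1+q)/(1−q))^{n_L}`. -/
theorem P_L_Ad_wL (cs : CoxeterSystem M W) (D : AffineData cs)
    (L : Set W) (hL : L ⊂ Set.range cs.simple)
    (hLfin : (Subgroup.closure L : Set W).Finite)
    (wL : W) (hwL_mem : wL ∈ Subgroup.closure L)
    (hwL_max : ∀ u ∈ Subgroup.closure L, cs.length u ≤ cs.length wL)
    (k : ℕ) (hk : k = L.ncard) (ex : Fin k → ℕ) (hex_pos : ∀ i, 0 < ex i)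
    (hex : (∑ᶠ x : W, if x ∈ Subgroup.closure L
          then (Polynomial.X : Polynomial ℤ) ^ cs.length x else 0)
        = ∏ i : Fin k, ∑ j ∈ Finset.range (ex i + 1), (Polynomial.X : Polynomial ℤ) ^ j) :
    (∑ᶠ x : W, if x ∈ Subgroup.closure L ∧ wL * x * wL = x
          then (Polynomial.X : Polynomial ℤ) ^ cs.length x else 0)
        * (1 - Polynomial.X) ^ (Finset.univ.filter fun i => Odd (ex i)).card
      = (∑ᶠ x : W, if x ∈ Subgroup.closure L
          then (-Polynomial.X : Polynomial ℤ) ^ cs.length x else 0)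
        * (1 + Polynomial.X) ^ (Finset.univ.filter fun i => Odd (ex i)).card :=
  P_L_Ad_wL_general cs hL.subset hLfin hwL_mem hwL_max ex hex

end LY
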